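/- Let q be a prime power and n a positive integer. Let k be a divisor of q^n − 1 and let p_1, …, p_s (s ≥ 0) be the distinct primes that divide q^n − 1 but do not divide k. Set δ = 1 − Σ_{i=1}^{s} 1/p_i (with δ = 1 if s = 0) and suppose δ > 0; set Δ = (s − 1)/δ + 2. If q^{n/2 − 2} > 4·Δ·2^{ω(k)}, then for every a, b in F_q there exists a nonzero element ξ in F_{q^n} such that Tr(ξ) = a, Tr(ξ^{-1}) = b, and ξ + ξ^{-1} is a primitive element of F_{q^n}. -/

import Mathlib

/-!
Cohen's sieve provides a function on `Eˣ`, positive only at primitive elements, whose expansion into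
multiplicative characters `χ` has nonprincipal coefficients of total size at most about
`Δ 2 ^ ω(k)` times the principal one.
Detecting the two traces with additive characters `ψ`, the theorem reduces to the Weil bound
`|∑ χ(x + x⁻¹) ψ(u x + v x⁻¹)| ≤ 4 √#E`.

The Weil bound follows from Stepanov's method, applied over extensions of even degree. With
`Q = #E`, the sums over them are controlled by the numbers of rational points of the curves
`Y ^ (Q - 1) = a (x + x⁻¹)`, `Z ^ Q - Z = u x + v x⁻¹ + b`, which have one place at infinity. Over a
field with `r ^ 2` elements, a relation `∑ c f ^ r g = 0` between functions with few poles makes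
`∑ c ^ r f g ^ r` vanish at every rational point, because Frobenius fixes the point, and a function
has about as many zeros as poles. The character sums are also the prime power sums of a
multiplicative function on monic polynomials whose `L`-series is a polynomial of degree at most `4`.
Hence they are minus power sums of at most four numbers, each at most `√Q` in absolute value by
the bound over large extensions.
-/

namespace TracePrimitive

/-! ### Counting points on curves with one place at infinity -/

section PoleOrder

variable {E R Γ ι : Type*} [Field E] [CommRing R] [Algebra E R]
  [LinearOrderedCommGroupWithZero Γ] {ν : Valuation R Γ} {γ : Γ}

theorem exists_valuation_sum_smul_eq {κ : Type*} (hγ : 1 < γ)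
    (hE : ∀ c : E, c ≠ 0 → ν (algebraMap E R c) = 1) {s : Finset κ} {f : κ → R} {w : κ → ℕ}
    (hf : ∀ i ∈ s, ν (f i) = γ ^ w i) (hw : Set.InjOn w s) {c : κ → E} (hc : ∃ i ∈ s, c i ≠ 0) :
    ∃ i ∈ s, ν (∑ j ∈ s, c j • f j) = γ ^ w i ∧ ∀ j ∈ s, c j ≠ 0 → w j ≤ w i := by
  classical
  have valuation_term {i : κ} (hi : i ∈ s) (hci : c i ≠ 0) : ν (c i • f i) = γ ^ w i := by
    rw [Algebra.smul_def, map_mul, hE _ hci, one_mul, hf i hi]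
  obtain ⟨i, hi, hmax⟩ := Finset.exists_max_image {j ∈ s | c j ≠ 0} w
    (by simpa only [Finset.Nonempty, Finset.mem_filter] using hc)
  simp only [Finset.mem_filter, and_imp] at hi hmax
  refine ⟨i, hi.1, ?_, hmax⟩
  rw [ν.map_sum_eq_of_lt hi.1, valuation_term hi.1 hi.2]
  intro j hj
  simp only [Finset.mem_sdiff, Finset.mem_singleton] at hj
  rw [valuation_term hi.1 hi.2]
  by_cases hcj : c j = 0
  · rw [hcj, zero_smul, map_zero]
    exact pow_pos (zero_lt_one.trans hγ) _
  · rw [valuation_term hj.1 hcj]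
    exact pow_lt_pow_right₀ hγ
      ((hmax j hj.1 hcj).lt_of_ne fun h => hj.2 (hw hj.1 hi.1 h))

/-- A basis of the coordinate ring `R` of an affine curve with a single place `ν` at infinity,
adapted to the pole order: `b i` has a pole of order `wt i`, where `γ` is the valuation of a
function with a simple pole, and distinct basis elements have distinct pole orders. The valuation
may have a nontrivial support a priori. -/
structure IsPoleOrderBasis (ν : Valuation R Γ) (γ : Γ) (b : Module.Basis ι E R) (wt : ι → ℕ) :
    Prop where
  one_lt : 1 < γ
  valuation_algebraMap : ∀ c : E, c ≠ 0 → ν (algebraMap E R c) = 1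
  valuation_basis : ∀ i, ν (b i) = γ ^ wt i
  injective_wt : Function.Injective wt

/-- The Riemann–Roch space of functions with a pole of order at most `M` at infinity. -/
def poleSpace (b : Module.Basis ι E R) (wt : ι → ℕ) (M : ℕ) : Submodule E R :=
  Submodule.span E (Set.range fun i : {i // wt i ≤ M} => b i)

namespace IsPoleOrderBasis

variable {b : Module.Basis ι E R} {wt : ι → ℕ} (hb : IsPoleOrderBasis ν γ b wt)
include hb

theorem finite_setOf_wt_le (M : ℕ) : Finite {i // wt i ≤ M} :=
  ((Set.finite_Iic M).preimage hb.injective_wt.injOn).to_subtype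

theorem exists_valuation_eq_pow {f : R} (hf : f ≠ 0) :
    ∃ i, ν f = γ ^ wt i ∧ ∀ j, b.repr f j ≠ 0 → wt j ≤ wt i := by
  obtain ⟨j, hj⟩ := Finsupp.ne_iff.1 (b.repr.map_ne_zero_iff.2 hf)
  obtain ⟨i, -, hval, hmax⟩ := exists_valuation_sum_smul_eq (c := b.repr f) hb.one_lt
    hb.valuation_algebraMap (fun i _ => hb.valuation_basis i) hb.injective_wt.injOn
    ⟨j, Finsupp.mem_support_iff.2 hj, hj⟩
  refine ⟨i, ?_, fun j hj => hmax j (Finsupp.mem_support_iff.2 hj) hj⟩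
  rwa [show ∑ j ∈ (b.repr f).support, b.repr f j • b j = f from b.linearCombination_repr f] at hval

theorem valuation_ne_zero {f : R} (hf : f ≠ 0) : ν f ≠ 0 := by
  obtain ⟨i, hi, -⟩ := hb.exists_valuation_eq_pow hf
  exact hi ▸ pow_ne_zero _ (zero_lt_one.trans hb.one_lt).ne'

theorem valuation_smul_le (c : E) (f : R) : ν (c • f) ≤ ν f := by
  obtain rfl | hc := eq_or_ne c 0
  · simp
  · rw [Algebra.smul_def, map_mul, hb.valuation_algebraMap c hc, one_mul]

theorem mem_poleSpace_iff {f : R} {M : ℕ} : f ∈ poleSpace b wt M ↔ ν f ≤ γ ^ M := by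
  refine ⟨fun hf => ?_, fun hf => ?_⟩
  · induction hf using Submodule.span_induction with
    | mem f hf =>
      obtain ⟨i, rfl⟩ := hf
      simpa only [hb.valuation_basis] using pow_le_pow_right₀ hb.one_lt.le i.2
    | zero => simp
    | add f g _ _ hf hg => exact ν.map_add_le hf hg
    | smul c f _ hf => exact (hb.valuation_smul_le c f).trans hf
  · obtain rfl | h0 := eq_or_ne f 0
    · exact zero_mem _
    obtain ⟨i, hi, hmax⟩ := hb.exists_valuation_eq_pow h0
    have hiM : wt i ≤ M := (pow_le_pow_iff_right₀ hb.one_lt).1 (hi ▸ hf)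
    rw [← b.linearCombination_repr f, Finsupp.linearCombination_apply]
    exact Submodule.sum_mem _ fun j hj => Submodule.smul_mem _ _ <| Submodule.subset_span
      ⟨⟨j, (hmax j (Finsupp.mem_support_iff.1 hj)).trans hiM⟩, rfl⟩

theorem finite_poleSpace (M : ℕ) : Module.Finite E (poleSpace b wt M) :=
  have := hb.finite_setOf_wt_le M
  .span_of_finite E (Set.finite_range _)

omit hb in
theorem finrank_poleSpace (b : Module.Basis ι E R) (wt : ι → ℕ) (M : ℕ) :
    Module.finrank E (poleSpace b wt M) = Nat.card {i // wt i ≤ M} :=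
  Module.finrank_eq_nat_card_basis <| Module.Basis.span <|
    b.linearIndependent.comp (Subtype.val : {i // wt i ≤ M} → ι) Subtype.val_injective

theorem finrank_poleSpace_le (M : ℕ) : Module.finrank E (poleSpace b wt M) ≤ M + 1 := by
  rw [finrank_poleSpace]
  simpa only [Nat.card_eq_fintype_card, Fintype.card_fin] using Nat.card_le_card_of_injective
    (fun i : {i // wt i ≤ M} => (⟨wt i, Nat.lt_succ_of_le i.2⟩ : Fin (M + 1)))
    fun i j hij => Subtype.ext (hb.injective_wt (congrArg Fin.val hij))

omit hb in
theorem eval_surjective (T : Finset (R →ₐ[E] E)) :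
    Function.Surjective (LinearMap.pi fun φ : T => φ.1.toLinearMap) := by
  classical
  rw [← LinearMap.range_eq_top]
  by_contra hne
  obtain ⟨g, hg, hle⟩ := Submodule.exists_le_ker_of_lt_top _ (lt_top_iff_ne_top.2 hne)
  have hindep : LinearIndependent E fun φ : T => φ.1.toLinearMap :=
    (linearIndependent_algHom_toLinearMap E R E).comp _ Subtype.val_injective
  refine hg (LinearMap.pi_ext' fun φ => LinearMap.ext_ring ?_)
  refine Fintype.linearIndependent_iff.1 hindep (fun φ => g (Pi.single φ 1)) ?_ φ
  ext f
  have hf : g (LinearMap.pi (fun φ : T => φ.1.toLinearMap) f) = 0 := hle ⟨f, rfl⟩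
  have hsingle (φ : T) : (fun θ => if φ = θ then (1 : E) else 0) = Pi.single φ 1 := by
    ext θ
    simp [Pi.single_apply, eq_comm]
  rw [LinearMap.pi_apply_eq_sum_univ] at hf
  simpa [mul_comm, hsingle] using hf

theorem exists_poleSpace_eval_surjective (T : Finset (R →ₐ[E] E)) :
    ∃ N₀, ∀ N, N₀ ≤ N → ∀ y : T → E, ∃ f ∈ poleSpace b wt N, ∀ φ : T, φ.1 f = y φ := by
  classical
  choose pre hpre using fun φ : T => eval_surjective T (Pi.single φ 1)
  choose ord hord using fun φ : T => show ∃ M, ν (pre φ) ≤ γ ^ M by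
    obtain h0 | h0 := eq_or_ne (pre φ) 0
    · exact ⟨0, by simp [h0]⟩
    · exact (hb.exists_valuation_eq_pow h0).imp' wt fun i hi => hi.1.le
  refine ⟨Finset.univ.sup ord, fun N hN y => ⟨∑ φ, y φ • pre φ, ?_, fun φ => ?_⟩⟩
  · refine Submodule.sum_mem _ fun φ _ => Submodule.smul_mem _ _ (hb.mem_poleSpace_iff.2 ?_)
    exact (hord φ).trans <| pow_le_pow_right₀ hb.one_lt.le <|
      (Finset.le_sup (Finset.mem_univ φ)).trans hN
  · have hpre' (θ : T) : φ.1 (pre θ) = Pi.single (M := fun _ => E) θ 1 φ := congrFun (hpre θ) φ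
    simp [map_sum, hpre', Pi.single_apply]

theorem card_le_of_forall_eq_zero {g D : ℕ} (hg : ∀ M, M + 1 ≤ Nat.card {i // wt i ≤ M} + g)
    {h : R} (h0 : h ≠ 0) (hD : ν h ≤ γ ^ D) {T : Finset (R →ₐ[E] E)} (hT : ∀ φ ∈ T, φ h = 0) :
    T.card ≤ D + g := by
  obtain ⟨N, hN⟩ := hb.exists_poleSpace_eval_surjective T
  have := hb.finite_poleSpace (N + D)
  have hmulmem (f : poleSpace b wt N) : h * f ∈ poleSpace b wt (N + D) := by
    rw [hb.mem_poleSpace_iff, map_mul, add_comm, pow_add]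
    exact mul_le_mul' hD (hb.mem_poleSpace_iff.1 f.2)
  let ev : poleSpace b wt (N + D) →ₗ[E] (T → E) :=
    (LinearMap.pi fun φ : T => φ.1.toLinearMap) ∘ₗ Submodule.subtype _
  let mulh : poleSpace b wt N →ₗ[E] LinearMap.ker ev :=
    (((LinearMap.mulLeft E h) ∘ₗ Submodule.subtype _).codRestrict _ hmulmem).codRestrict _
      fun f => funext fun φ => show φ.1 (h * f) = 0 by rw [map_mul, hT φ.1 φ.2, zero_mul]
  have ev_surjective : Function.Surjective ev := fun y => by
    obtain ⟨f, hf, hfy⟩ := hN (N + D) (Nat.le_add_right _ _) y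
    exact ⟨⟨f, hf⟩, funext hfy⟩
  have mulh_injective : Function.Injective mulh := by
    refine (injective_iff_map_eq_zero _).2 fun f hf => by_contra fun hf0 => ?_
    have hν : ν h * ν (f : R) = 0 := by
      rw [← map_mul, show h * (f : R) = 0 from congrArg (fun x => (x.1 : R)) hf, map_zero]
    exact mul_ne_zero (hb.valuation_ne_zero h0)
      (hb.valuation_ne_zero fun h => hf0 (Subtype.ext h)) hν
  have hrank := ev.finrank_range_add_finrank_ker
  rw [LinearMap.range_eq_top.2 ev_surjective, finrank_top, Module.finrank_fintype_fun_eq_card,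
    Fintype.card_coe] at hrank
  have hker := LinearMap.finrank_le_finrank_of_injective mulh_injective
  have hupper := hb.finrank_poleSpace_le (N + D)
  rw [finrank_poleSpace] at hker
  have := hg N
  omega

theorem exists_sum_pow_mul_eq_zero {r m n : ℕ}
    (hdim : r * n + m + 1 < Nat.card {j // wt j ≤ n} * Nat.card {i // wt i ≤ m}) :
    ∃ c : {j // wt j ≤ n} × {i // wt i ≤ m} →₀ E, c ≠ 0 ∧
      c.sum (fun t a => a • (b t.1 ^ r * b t.2)) = 0 := by
  have := hb.finite_poleSpace (r * n + m)
  have := hb.finite_setOf_wt_le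
  have hmem (t : {j // wt j ≤ n} × {i // wt i ≤ m}) :
      b t.1 ^ r * b t.2 ∈ poleSpace b wt (r * n + m) := by
    rw [hb.mem_poleSpace_iff, map_mul, map_pow, hb.valuation_basis, hb.valuation_basis,
      ← pow_mul, ← pow_add]
    exact pow_le_pow_right₀ hb.one_lt.le
      (add_le_add (by rw [mul_comm]; exact Nat.mul_le_mul_left _ t.1.2) t.2.2)
  by_contra! hindep
  have hli : LinearIndependent E fun t => (⟨_, hmem t⟩ : poleSpace b wt (r * n + m)) := by
    rw [linearIndependent_iff]
    intro c hc
    by_contra h0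
    refine hindep c h0 ?_
    simpa [Finsupp.linearCombination_apply, Finsupp.sum] using congrArg Subtype.val hc
  have := Fintype.ofFinite ({j // wt j ≤ n} × {i // wt i ≤ m})
  have hcard := hli.fintype_card_le_finrank
  rw [← Nat.card_eq_fintype_card, Nat.card_prod] at hcard
  have := hb.finrank_poleSpace_le (r * n + m)
  omega

theorem exists_ne_zero_forall_algHom_eq_zero [Fintype E] {p l m n : ℕ} [Fact p.Prime] [CharP E p]
    (hE : Fintype.card E = (p ^ l) ^ 2) (hn : n < p ^ l)
    (hdim : p ^ l * n + m + 1 < Nat.card {j // wt j ≤ n} * Nat.card {i // wt i ≤ m}) :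
    ∃ h : R, h ≠ 0 ∧ ν h ≤ γ ^ (n + p ^ l * m) ∧ ∀ φ : R →ₐ[E] E, φ h = 0 := by
  obtain ⟨c, hc0, hc⟩ := hb.exists_sum_pow_mul_eq_zero hdim
  set r := p ^ l with hr
  have pow_r_pow_r (x : E) : (x ^ r) ^ r = x := by
    rw [← pow_mul, ← sq, ← hE, FiniteField.pow_card]
  obtain ⟨t, ht⟩ := Finsupp.ne_iff.1 hc0
  obtain ⟨i, -, hval, -⟩ := exists_valuation_sum_smul_eq (ν := ν) (s := c.support)
    (f := fun t => b t.1 * b t.2 ^ r) (w := fun t => wt t.1 + r * wt t.2) (c := fun t => c t ^ r)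
    hb.one_lt hb.valuation_algebraMap
    (fun t _ => by
      rw [map_mul, map_pow, hb.valuation_basis, hb.valuation_basis, ← pow_mul, ← pow_add,
        mul_comm r])
    (fun t _ t' _ htt' => by
      have hlt := t.1.2.trans_lt hn
      have hlt' := t'.1.2.trans_lt hn
      refine Prod.ext (Subtype.ext (hb.injective_wt ?_)) (Subtype.ext (hb.injective_wt ?_))
      · simpa [Nat.mod_eq_of_lt hlt, Nat.mod_eq_of_lt hlt'] using congrArg (· % r) htt'
      · simpa [Nat.add_mul_div_left _ _ (Nat.zero_lt_of_lt hn), Nat.div_eq_of_lt hlt,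
          Nat.div_eq_of_lt hlt'] using congrArg (· / r) htt')
    ⟨t, Finsupp.mem_support_iff.2 ht, pow_ne_zero _ ht⟩
  refine ⟨_, fun h0 => ?_, hval.le.trans (pow_le_pow_right₀ hb.one_lt.le <|
    add_le_add i.1.2 (Nat.mul_le_mul_left r i.2.2)), fun φ => ?_⟩
  · rw [h0, map_zero] at hval
    exact pow_ne_zero _ (zero_lt_one.trans hb.one_lt).ne' hval.symm
  · refine eq_zero_of_pow_eq_zero (n := r) ?_
    rw [map_sum, hr, sum_pow_char_pow, ← hr, ← map_zero φ, ← hc, Finsupp.sum, map_sum]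
    refine Finset.sum_congr rfl fun t _ => ?_
    simp only [map_smul, map_mul, map_pow, smul_eq_mul, mul_pow, pow_r_pow_r]

theorem card_algHom_le [Fintype E] {p l g : ℕ} [Fact p.Prime] [CharP E p]
    (hE : Fintype.card E = (p ^ l) ^ 2) (hg : ∀ M, M + 1 ≤ Nat.card {i // wt i ≤ M} + g)
    (hl : (g + 2) ^ 2 ≤ p ^ l) (T : Finset (R →ₐ[E] E)) :
    T.card ≤ (p ^ l) ^ 2 + (2 * g + 2) * p ^ l := by
  set r := p ^ l with hr
  obtain ⟨s, hs⟩ : ∃ s, r = g + 1 + s := Nat.exists_eq_add_of_le (m := g + 1) (by nlinarith)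
  have hdim : r * (r - 1) + (r + 2 * g) + 1 <
      Nat.card {j // wt j ≤ r - 1} * Nat.card {i // wt i ≤ r + 2 * g} := by
    have hcard₁ := hg (r - 1)
    have hcard₂ := hg (r + 2 * g)
    calc r * (r - 1) + (r + 2 * g) + 1 < (s + 1) * (r + g + 1) := by
          rw [hs, show g + 1 + s - 1 = g + s by omega]
          nlinarith
      _ ≤ _ := Nat.mul_le_mul (by omega) (by omega)
  obtain ⟨h, h0, hval, hφ⟩ := hb.exists_ne_zero_forall_algHom_eq_zero hE (by omega) hdim
  refine (hb.card_le_of_forall_eq_zero hg h0 hval fun φ _ => hφ φ).trans ?_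
  rw [← hr, hs, show g + 1 + s - 1 = g + s by omega]
  nlinarith

end IsPoleOrderBasis

end PoleOrder

/-! ### The fibre product of a Kummer and an Artin–Schreier curve -/

section

universe u

open Polynomial

section Valuation

variable {E L Γ : Type*} [Field E] [Field L] [Algebra E L] [LinearOrderedCommGroupWithZero Γ]
  {ν : Valuation L Γ}

theorem exists_valuationSubring_one_lt_valuation {x : L} (hx : Transcendental E x) :
    ∃ V : ValuationSubring L, (∀ c : E, c ≠ 0 → V.valuation (algebraMap E L c) = 1) ∧
      1 < V.valuation x := by
  have : IsIntegrallyClosedIn (integralClosure E L).toSubring L :=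
    inferInstanceAs (IsIntegrallyClosedIn (integralClosure E L) L)
  have hx : x ∉ (integralClosure E L).toSubring := fun h => hx (IsIntegral.isAlgebraic h)
  obtain ⟨V, hV, hxV⟩ := Subring.exists_le_valuationSubring_of_isIntegrallyClosedIn hx
  have hle (c : E) : V.valuation (algebraMap E L c) ≤ 1 := by
    rw [ValuationSubring.valuation_le_one_iff]
    exact hV (show IsIntegral E (algebraMap E L c) from isIntegral_algebraMap)
  refine ⟨V, fun c hc => (hle c).antisymm ?_, ?_⟩
  · have hinv := hle c⁻¹
    rw [map_inv₀, map_inv₀] at hinv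
    exact (inv_le_one₀ (zero_lt_iff.2 (by simpa using hc))).1 hinv
  · rwa [← not_le, ValuationSubring.valuation_le_one_iff]

theorem valuation_pow_of_one_lt_valuation_pow_sub {z : L} {P : ℕ} (hP : 2 ≤ P)
    (hz : 1 < ν (z ^ P - z)) : ν z ^ P = ν (z ^ P - z) := by
  have one_lt : 1 < ν z := by
    by_contra! hle
    refine hz.not_ge (ν.map_sub_le ?_ hle)
    rw [map_pow]
    exact pow_le_one' hle P
  rw [ν.map_sub_eq_of_lt_left, map_pow]
  rw [map_pow]
  exact lt_self_pow₀ one_lt hP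

end Valuation

section DoubleCover

variable {E : Type*} [Field E] {f g : E[X][X]}

/-- The coordinate ring `E[X, Y, Z] / (f(X, Y), g(X, Z))` of the fibre product of two plane curves
over the affine line. -/
abbrev DoubleCover (f g : E[X][X]) : Type _ :=
  AdjoinRoot (g.map (AdjoinRoot.of f))

namespace DoubleCover

variable (f g) in
/-- The monomial `X ^ i * Y ^ j * Z ^ k` of the coordinate ring. -/
noncomputable def monomial (t : (ℕ × Fin f.natDegree) × Fin g.natDegree) : DoubleCover f g :=
  AdjoinRoot.of _ (AdjoinRoot.of f (X ^ t.1.1) * AdjoinRoot.root f ^ (t.1.2 : ℕ)) *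
    AdjoinRoot.root _ ^ (t.2 : ℕ)

theorem exists_basis_eq_monomial (hf : f.Monic) (hf0 : f.natDegree ≠ 0) (hg : g.Monic) :
    ∃ b : Module.Basis ((ℕ × Fin f.natDegree) × Fin g.natDegree) E (DoubleCover f g),
      ∀ t, b t = monomial f g t := by
  have : Nontrivial (AdjoinRoot f) :=
    AdjoinRoot.nontrivial f fun h => hf0 (natDegree_eq_of_degree_eq_some h)
  have hdimf : (AdjoinRoot.powerBasis' hf).dim = f.natDegree := AdjoinRoot.powerBasis'_dim hf
  have hdimg : (AdjoinRoot.powerBasis' (hg.map (AdjoinRoot.of f))).dim = g.natDegree := by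
    rw [AdjoinRoot.powerBasis'_dim, hg.natDegree_map]
  refine ⟨((basisMonomials E).smulTower
    ((AdjoinRoot.powerBasis' hf).basis.reindex (finCongr hdimf))).smulTower
    ((AdjoinRoot.powerBasis' (hg.map (AdjoinRoot.of f))).basis.reindex (finCongr hdimg)),
    fun t => ?_⟩
  simp [monomial, Algebra.smul_def, X_pow_eq_monomial]

variable {A : Type*} [CommRing A] [Algebra E A]

/-- The homomorphism from the coordinate ring given by a point of the fibre product. -/
noncomputable def lift (x y z : A) (hf : f.eval₂ (aeval x : E[X] →ₐ[E] A) y = 0)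
    (hg : g.eval₂ (aeval x : E[X] →ₐ[E] A) z = 0) : DoubleCover f g →ₐ[E] A :=
  AdjoinRoot.liftAlgHom _ (AdjoinRoot.liftAlgHom f (aeval x) y hf) z <| by
    rw [eval₂_map]
    convert hg using 2
    ext <;> simp

theorem lift_monomial {x y z : A} (hf : f.eval₂ (aeval x : E[X] →ₐ[E] A) y = 0)
    (hg : g.eval₂ (aeval x : E[X] →ₐ[E] A) z = 0) (t : (ℕ × Fin f.natDegree) × Fin g.natDegree) :
    lift x y z hf hg (monomial f g t) = x ^ t.1.1 * y ^ (t.1.2 : ℕ) * z ^ (t.2 : ℕ) := by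
  simp [lift, monomial]

end DoubleCover

/-- The pole order of `X ^ i * Y ^ j * Z ^ k` at infinity, in units where a function of pole order
`1` on the line has pole order `d * P`: there `Y ^ d` and `Z ^ P` have the pole orders of
`X ^ (d + 1)` and `X ^ (P + 1)`. -/
def poleOrder (d P : ℕ) (t : (ℕ × Fin d) × Fin P) : ℕ :=
  d * P * t.1.1 + (d + 1) * P * t.1.2 + (P + 1) * d * t.2

theorem poleOrder_injective {d P : ℕ} (hdP : d.Coprime P) : Function.Injective (poleOrder d P) := by
  rintro ⟨⟨i, j⟩, k⟩ ⟨⟨i', j'⟩, k'⟩ h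
  simp only [poleOrder] at h
  have hj : j = j' := by
    have hmod : P * j ≡ P * j' [MOD d] := by
      have key (i j k : ℕ) : d * P * i + (d + 1) * P * j + (P + 1) * d * k ≡ P * j [MOD d] := by
        rw [show d * P * i + (d + 1) * P * j + (P + 1) * d * k =
          P * j + d * (P * i + P * j + (P + 1) * k) by ring]
        exact Nat.add_modulus_mul_modEq_iff.2 rfl
      exact (key i j k).symm.trans (h ▸ key i' j' k')
    exact Fin.ext ((hmod.cancel_left_of_coprime hdP).eq_of_lt_of_lt j.2 j'.2)
  have hk : k = k' := by
    have hmod : d * k ≡ d * k' [MOD P] := by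
      have key (i j k : ℕ) : d * P * i + (d + 1) * P * j + (P + 1) * d * k ≡ d * k [MOD P] := by
        rw [show d * P * i + (d + 1) * P * j + (P + 1) * d * k =
          d * k + P * (d * i + (d + 1) * j + d * k) by ring]
        exact Nat.add_modulus_mul_modEq_iff.2 rfl
      exact (key i j k).symm.trans (h ▸ key i' j' k')
    exact Fin.ext ((hmod.cancel_left_of_coprime hdP.symm).eq_of_lt_of_lt k.2 k'.2)
  subst hj hk
  have : d * P ≠ 0 := Nat.mul_ne_zero j.pos.ne' k.pos.ne'
  simpa [this] using h

/-- An upper bound for the number of gaps among the values of `poleOrder`. -/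
def gapBound (d P : ℕ) : ℕ := (d + 1) * P * d + (P + 1) * d * P

theorem succ_le_card_poleOrder_le_add {d P : ℕ} (hd : 0 < d) (hP : 0 < P)
    (hcop : d.Coprime P) (M : ℕ) :
    M + 1 ≤ Nat.card {t // poleOrder d P t ≤ M} + gapBound d P := by
  set g := gapBound d P with hg
  obtain hlt | hle := Nat.lt_or_ge M g
  · omega
  have hdP : 0 < d * P := Nat.mul_pos hd hP
  have hmem (t : (Fin ((M - g) / (d * P) + 1) × Fin d) × Fin P) :
      poleOrder d P ((t.1.1, t.1.2), t.2) ≤ M := by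
    have hi := (Nat.mul_le_mul_left (d * P) (Nat.lt_succ_iff.1 t.1.1.2)).trans (Nat.mul_div_le _ _)
    have hj := Nat.mul_le_mul_left ((d + 1) * P) t.1.2.2.le
    have hk := Nat.mul_le_mul_left ((P + 1) * d) t.2.2.le
    simp only [poleOrder]
    rw [gapBound] at hg
    omega
  have hfin : Finite {t // poleOrder d P t ≤ M} :=
    ((Set.finite_Iic M).preimage (poleOrder_injective hcop).injOn).to_subtype
  have hcard := Nat.card_le_card_of_injective
    (fun t => (⟨_, hmem t⟩ : {t // poleOrder d P t ≤ M})) fun s t hst => by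
      simpa [Prod.ext_iff, Fin.ext_iff] using hst
  have hlt := Nat.lt_mul_div_succ (M - g) hdP
  simp only [Nat.card_eq_fintype_card, Fintype.card_prod, Fintype.card_fin] at hcard
  rw [mul_comm _ d, mul_right_comm] at hcard
  omega

theorem DoubleCover.exists_isPoleOrderBasis {L Γ : Type*} [Field L] [Algebra E L]
    [LinearOrderedCommGroupWithZero Γ] {ν : Valuation L Γ}
    (hE : ∀ c : E, c ≠ 0 → ν (algebraMap E L c) = 1)
    (hf : f.Monic) (hf0 : f.natDegree ≠ 0) (hg : g.Monic) (hg0 : g.natDegree ≠ 0)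
    (hfg : f.natDegree.Coprime g.natDegree) {x y z : L}
    (hy : f.eval₂ (aeval x : E[X] →ₐ[E] L) y = 0) (hz : g.eval₂ (aeval x : E[X] →ₐ[E] L) z = 0)
    (hνx : 1 < ν x) (hνy : ν y ^ f.natDegree = ν x ^ (f.natDegree + 1))
    (hνz : ν z ^ g.natDegree = ν x ^ (g.natDegree + 1)) :
    ∃ (μ : Valuation (DoubleCover f g) Γ)
      (b : Module.Basis ((ℕ × Fin f.natDegree) × Fin g.natDegree) E (DoubleCover f g)),
      IsPoleOrderBasis μ (ν x) b (poleOrder f.natDegree g.natDegree) := by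
  obtain ⟨b, hb⟩ := exists_basis_eq_monomial hf hf0 hg
  let φ : DoubleCover f g →ₐ[E] L := lift x y z hy hz
  refine ⟨(ν.map (powMonoidWithZeroHom (mul_ne_zero hf0 hg0)) (pow_left_mono _)).comap φ, b, hνx,
    fun c hc => ?_, fun t => ?_, poleOrder_injective hfg⟩
  · change ν (φ (algebraMap E _ c)) ^ (f.natDegree * g.natDegree) = 1
    rw [φ.commutes, hE c hc, one_pow]
  · have hνt : ν (φ (b t)) = ν x ^ t.1.1 * ν y ^ (t.1.2 : ℕ) * ν z ^ (t.2 : ℕ) := by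
      rw [hb, lift_monomial, map_mul, map_mul, map_pow, map_pow, map_pow]
    calc ν (φ (b t)) ^ (f.natDegree * g.natDegree)
        = ν x ^ (f.natDegree * g.natDegree * t.1.1) *
            ((ν y ^ f.natDegree) ^ (g.natDegree * t.1.2)) *
            ((ν z ^ g.natDegree) ^ (f.natDegree * t.2)) := by
          rw [hνt, mul_pow, mul_pow]
          simp only [← pow_mul]
          congr 2 <;> ring_nf
      _ = ν x ^ poleOrder f.natDegree g.natDegree t := by
          rw [hνy, hνz, poleOrder]
          simp only [← pow_mul, ← pow_add, mul_assoc]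

end DoubleCover

section Curve

variable {E : Type*} [Field E]

/-- The polynomial defining `Y ^ d = a * (X ^ (d + 1) + X ^ (d - 1))`, which is
`y ^ d = a * (x + x⁻¹)` in the coordinate `Y = x * y`. -/
noncomputable def kummerPoly (d : ℕ) (a : E) : E[X][X] :=
  X ^ d - C (C a * (X ^ (d + 1) + X ^ (d - 1)))

/-- The polynomial defining
`Z ^ P - X ^ (P - 1) * Z = u * X ^ (P + 1) + v * X ^ (P - 1) + b * X ^ P`, which is
`z ^ P - z = u * x + v * x⁻¹ + b` in the coordinate `Z = x * z`. -/
noncomputable def artinSchreierPoly (P : ℕ) (u v b : E) : E[X][X] :=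
  X ^ P - (C (X ^ (P - 1)) * X + C (C u * X ^ (P + 1) + C v * X ^ (P - 1) + C b * X ^ P))

theorem monic_kummerPoly {d : ℕ} (hd : d ≠ 0) (a : E) : (kummerPoly d a).Monic :=
  monic_X_pow_sub_C _ hd

theorem natDegree_kummerPoly (d : ℕ) (a : E) : (kummerPoly d a).natDegree = d :=
  natDegree_X_pow_sub_C

theorem degree_artinSchreierPoly {P : ℕ} (hP : 2 ≤ P) (u v b : E) :
    (artinSchreierPoly P u v b).degree = P := by
  have hlt (c c' : E[X]) : (C c * X + C c').degree < (X ^ P : E[X][X]).degree := by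
    rw [degree_X_pow]
    exact degree_linear_le.trans_lt (by exact_mod_cast hP)
  rw [artinSchreierPoly, degree_sub_eq_left_of_degree_lt (hlt _ _), degree_X_pow]

theorem monic_artinSchreierPoly {P : ℕ} (hP : 2 ≤ P) (u v b : E) :
    (artinSchreierPoly P u v b).Monic :=
  monic_X_pow_sub (degree_linear_le.trans_lt (by exact_mod_cast hP))

variable {A Γ : Type*} [Field A] [Algebra E A] [LinearOrderedCommGroupWithZero Γ]
  {ν : Valuation A Γ}

theorem eval₂_kummerPoly {d : ℕ} (hd : d ≠ 0) {a : E} {x y : A} (hx : x ≠ 0)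
    (hy : y ^ d = algebraMap E A a * (x + x⁻¹)) :
    (kummerPoly d a).eval₂ (aeval x : E[X] →ₐ[E] A) (x * y) = 0 := by
  obtain ⟨e, rfl⟩ := Nat.exists_eq_succ_of_ne_zero hd
  simp only [kummerPoly, eval₂_sub, eval₂_pow, eval₂_X, eval₂_C, mul_pow, hy]
  simp
  field_simp
  ring

theorem eval₂_artinSchreierPoly {P : ℕ} (hP : P ≠ 0) {u v b : E} {x z : A} (hx : x ≠ 0)
    (hz : z ^ P - z = algebraMap E A u * x + algebraMap E A v * x⁻¹ + algebraMap E A b) :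
    (artinSchreierPoly P u v b).eval₂ (aeval x : E[X] →ₐ[E] A) (x * z) = 0 := by
  obtain ⟨e, rfl⟩ := Nat.exists_eq_succ_of_ne_zero hP
  simp only [artinSchreierPoly, eval₂_sub, eval₂_pow, eval₂_add, eval₂_mul, eval₂_X, eval₂_C,
    mul_pow, eq_add_of_sub_eq hz]
  simp
  field_simp
  ring

theorem exists_pow_sub_self_eq [IsAlgClosed A] {P : ℕ} (hP : 2 ≤ P) (c : A) :
    ∃ z : A, z ^ P - z = c := by
  have hlt : (X + C c : A[X]).degree < (X ^ P : A[X]).degree := by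
    rw [degree_X_add_C, degree_X_pow]
    exact_mod_cast hP
  obtain ⟨z, hz⟩ := IsAlgClosed.exists_root (X ^ P - (X + C c)) (by
    rw [degree_sub_eq_left_of_degree_lt hlt, degree_X_pow]
    exact_mod_cast (by omega : P ≠ 0))
  simp only [IsRoot, eval_sub, eval_pow, eval_X, eval_add, eval_C] at hz
  exact ⟨z, by linear_combination hz⟩

theorem valuation_pow_kummer (hE : ∀ c : E, c ≠ 0 → ν (algebraMap E A c) = 1) {d : ℕ} {a : E}
    (ha : a ≠ 0) {x y : A} (hx : 1 < ν x) (hy : y ^ d = algebraMap E A a * (x + x⁻¹)) :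
    ν y ^ d = ν x := by
  rw [← map_pow, hy, map_mul, hE a ha, one_mul]
  refine ν.map_add_eq_of_lt_left (lt_trans ?_ hx)
  rw [map_inv₀]
  exact inv_lt_one_of_one_lt₀ hx

theorem valuation_pow_artinSchreier (hE : ∀ c : E, c ≠ 0 → ν (algebraMap E A c) = 1) {P : ℕ}
    (hP : 2 ≤ P) {u v b : E} (hu : u ≠ 0) {x z : A} (hx : 1 < ν x)
    (hz : z ^ P - z = algebraMap E A u * x + algebraMap E A v * x⁻¹ + algebraMap E A b) :
    ν z ^ P = ν x := by
  have hle (c : E) : ν (algebraMap E A c) ≤ 1 := by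
    obtain rfl | hc := eq_or_ne c 0
    · simp
    · exact (hE c hc).le
  have hlead : ν (algebraMap E A u * x) = ν x := by rw [map_mul, hE u hu, one_mul]
  have htail : ν (algebraMap E A v * x⁻¹ + algebraMap E A b) ≤ 1 := by
    refine ν.map_add_le ?_ (hle b)
    rw [map_mul, map_inv₀]
    exact mul_le_one' (hle v) (inv_le_one_of_one_le₀ hx.le)
  have hrhs : ν (z ^ P - z) = ν x := by
    rw [hz, add_assoc, ν.map_add_eq_of_lt_left (htail.trans_lt (hlead ▸ hx)), hlead]
  rw [valuation_pow_of_one_lt_valuation_pow_sub hP (hrhs ▸ hx), hrhs]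

theorem exists_isPoleOrderBasis_curve {E : Type u} [Field E] {d P : ℕ} (hd : d ≠ 0) (hP : 2 ≤ P)
    (hdP : d.Coprime P) {a u : E} (ha : a ≠ 0) (hu : u ≠ 0) (v b : E) :
    ∃ (Γ : Type u) (_ : LinearOrderedCommGroupWithZero Γ) (γ : Γ)
      (ν : Valuation (DoubleCover (kummerPoly d a) (artinSchreierPoly P u v b)) Γ)
      (β : Module.Basis
        ((ℕ × Fin (kummerPoly d a).natDegree) × Fin (artinSchreierPoly P u v b).natDegree) E
        (DoubleCover (kummerPoly d a) (artinSchreierPoly P u v b))),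
      IsPoleOrderBasis ν γ β
        (poleOrder (kummerPoly d a).natDegree (artinSchreierPoly P u v b).natDegree) := by
  let L := AlgebraicClosure (RatFunc E)
  let x : L := algebraMap (RatFunc E) L RatFunc.X
  have hx : Transcendental E x :=
    (transcendental_algebraMap_iff (algebraMap (RatFunc E) L).injective).2
      (by simpa using RatFunc.transcendental_X (K := E))
  obtain ⟨V, hE, hVx⟩ := exists_valuationSubring_one_lt_valuation hx
  obtain ⟨y, hy⟩ := IsAlgClosed.exists_pow_nat_eq (algebraMap E L a * (x + x⁻¹)) hd.bot_lt
  obtain ⟨z, hz⟩ := exists_pow_sub_self_eq hP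
    (algebraMap E L u * x + algebraMap E L v * x⁻¹ + algebraMap E L b)
  have hx0 : x ≠ 0 := V.valuation.ne_zero_iff.1 (zero_lt_one.trans hVx).ne'
  have hdeg₁ := natDegree_kummerPoly d a
  have hdeg₂ := natDegree_eq_of_degree_eq_some (degree_artinSchreierPoly hP u v b)
  obtain ⟨μ, β, hβ⟩ := DoubleCover.exists_isPoleOrderBasis hE (monic_kummerPoly hd a)
    (by rwa [hdeg₁]) (monic_artinSchreierPoly hP u v b) (by omega) (by rwa [hdeg₁, hdeg₂])
    (eval₂_kummerPoly hd hx0 hy) (eval₂_artinSchreierPoly (by omega) hx0 hz) hVx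
    (by rw [hdeg₁, map_mul, mul_pow, valuation_pow_kummer hE ha hVx hy, pow_succ])
    (by rw [hdeg₂, map_mul, mul_pow, valuation_pow_artinSchreier hE hP hu hVx hz, pow_succ])
  exact ⟨_, _, _, μ, β, hβ⟩

theorem card_curve_points_le [Fintype E] {d P : ℕ} (hd : d ≠ 0) (hP : 2 ≤ P)
    (hdP : d.Coprime P) {a u : E} (ha : a ≠ 0) (hu : u ≠ 0) (v b : E) {p l : ℕ} [Fact p.Prime]
    [CharP E p] (hE : Fintype.card E = (p ^ l) ^ 2) (hl : (gapBound d P + 2) ^ 2 ≤ p ^ l)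
    {T : Finset (E × E × E)} (hT : ∀ t ∈ T, t.1 ≠ 0 ∧ t.2.1 ^ d = a * (t.1 + t.1⁻¹) ∧
      t.2.2 ^ P - t.2.2 = u * t.1 + v * t.1⁻¹ + b) :
    T.card ≤ (p ^ l) ^ 2 + (2 * gapBound d P + 2) * p ^ l := by
  classical
  obtain ⟨Γ, _, γ, ν, β, hβ⟩ := exists_isPoleOrderBasis_curve hd hP hdP ha hu v b
  have hgap (M : ℕ) := succ_le_card_poleOrder_le_add hd.bot_lt (by omega : 0 < P) hdP M
  let φ (t : T) : DoubleCover (kummerPoly d a) (artinSchreierPoly P u v b) →ₐ[E] E :=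
    DoubleCover.lift t.1.1 (t.1.1 * t.1.2.1) (t.1.1 * t.1.2.2)
      (eval₂_kummerPoly hd (hT t t.2).1 (hT t t.2).2.1)
      (eval₂_artinSchreierPoly (by omega) (hT t t.2).1 (hT t t.2).2.2)
  have hφ : Function.Injective φ := by
    intro s t hst
    have hx : s.1.1 = t.1.1 := by
      simpa [φ, DoubleCover.lift] using
        congrArg (fun ψ => ψ (AdjoinRoot.of _ (AdjoinRoot.of _ X))) hst
    have hy : s.1.1 * s.1.2.1 = t.1.1 * t.1.2.1 := by
      simpa [φ, DoubleCover.lift] using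
        congrArg (fun ψ => ψ (AdjoinRoot.of _ (AdjoinRoot.root _))) hst
    have hz : s.1.1 * s.1.2.2 = t.1.1 * t.1.2.2 := by
      simpa [φ, DoubleCover.lift] using
        congrArg (fun ψ => ψ (AdjoinRoot.root _)) hst
    rw [hx] at hy hz
    exact Subtype.ext <| Prod.ext hx <| Prod.ext
      (mul_left_cancel₀ (hT t t.2).1 hy) (mul_left_cancel₀ (hT t t.2).1 hz)
  rw [← Fintype.card_coe, ← Finset.card_univ, ← Finset.card_image_of_injective _ hφ]
  refine hβ.card_algHom_le hE (fun M => ?_) hl _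
  rw [natDegree_kummerPoly, natDegree_eq_of_degree_eq_some (degree_artinSchreierPoly hP u v b)]
  exact hgap M

end Curve

end

/-! ### Bounding the character sums over extensions -/

section

open Polynomial

theorem exists_pow_eq_of_pow_card_div_eq_one {G : Type*} [Group G] [IsCyclic G] [Finite G] {d : ℕ}
    (hd : d ∣ Nat.card G) {x : G} (hx : x ^ (Nat.card G / d) = 1) : ∃ y : G, y ^ d = x := by
  obtain ⟨g, hg⟩ := IsCyclic.exists_generator (α := G)
  obtain ⟨j, rfl⟩ := (Submonoid.mem_powers_iff _ _).1 (mem_powers_iff_mem_zpowers.2 (hg x))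
  obtain ⟨m, hm⟩ := hd
  obtain ⟨hd0, hm0⟩ : 0 < d ∧ 0 < m := by
    simpa only [hm, Nat.mul_pos_iff_of_pos_left, CanonicallyOrderedAdd.mul_pos] using
      Nat.card_pos (α := G)
  have hdvd : d * m ∣ j * m := by
    rw [← hm, ← orderOf_eq_card_of_forall_mem_zpowers hg]
    refine orderOf_dvd_of_pow_eq_one ?_
    rwa [pow_mul, ← Nat.mul_div_cancel_left m hd0, ← hm]
  obtain ⟨i, rfl⟩ := Nat.dvd_of_mul_dvd_mul_right hm0 hdvd
  exact ⟨g ^ i, by rw [← pow_mul, mul_comm]⟩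

theorem add_algebraMap_pow_card {K E : Type*} [Field K] [Fintype K] [Field E] [Algebra K E] (z : E)
    (c : K) : (z + algebraMap K E c) ^ Fintype.card K = z ^ Fintype.card K + algebraMap K E c := by
  simpa using map_add (FiniteField.frobeniusAlgHom K E) z (algebraMap K E c)

section HilbertNinety

variable (K : Type*) {E : Type*} [Field K] [Fintype K] [Field E] [Finite E] [Algebra K E]

theorem mem_zpowers_frobeniusAlgEquivOfAlgebraic (σ : Gal(E/K)) :
    σ ∈ Subgroup.zpowers (FiniteField.frobeniusAlgEquivOfAlgebraic K E) := by
  obtain ⟨i, rfl⟩ := (FiniteField.bijective_frobeniusAlgEquivOfAlgebraic_pow K E).2 σ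
  exact Subgroup.npow_mem_zpowers _ _

theorem mem_range_algebraMap_of_pow_card_eq {x : E} (hx : x ^ Fintype.card K = x) :
    x ∈ Set.range (algebraMap K E) := by
  refine (IsGalois.mem_range_algebraMap_iff_fixed x).2 fun σ => ?_
  have hfix : FiniteField.frobeniusAlgEquivOfAlgebraic K E ∈ MulAction.stabilizer Gal(E/K) x := by
    simpa [MulAction.mem_stabilizer_iff] using hx
  exact Subgroup.zpowers_le.2 hfix (mem_zpowers_frobeniusAlgEquivOfAlgebraic K σ)

theorem exists_pow_card_sub_one_eq {x : E} (hx : Algebra.norm K x = 1) :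
    ∃ y ≠ 0, y ^ (Fintype.card K - 1) = x := by
  have hx0 : x ≠ 0 := Algebra.norm_ne_zero_iff.1 (hx ▸ one_ne_zero)
  have hpow := FiniteField.algebraMap_norm_eq_pow (K := K) (x := x)
  rw [hx, map_one, ← Nat.card_units, Nat.card_eq_fintype_card (α := K)] at hpow
  have hdvd : Fintype.card K - 1 ∣ Nat.card Eˣ := by
    rw [Nat.card_units, Module.natCard_eq_pow_finrank (K := K) (V := E), Nat.card_eq_fintype_card]
    exact Nat.sub_one_dvd_pow_sub_one _ _
  obtain ⟨y, hy⟩ := exists_pow_eq_of_pow_card_div_eq_one hdvd (x := Units.mk0 x hx0)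
    (Units.ext (by simpa using hpow.symm))
  exact ⟨y, y.ne_zero, by simpa using congrArg Units.val hy⟩

theorem exists_pow_card_sub_self_eq {x : E} (hx : Algebra.trace K E x = 0) :
    ∃ z : E, z ^ Fintype.card K - z = x := by
  let φ : E →ₗ[K] E :=
    (FiniteField.frobeniusAlgEquivOfAlgebraic K E).toLinearMap - LinearMap.id
  have hφ (z : E) : φ z = z ^ Fintype.card K - z := by simp [φ]
  have hker : LinearMap.ker φ ≤ LinearMap.range (Algebra.linearMap K E) := fun z hz =>
    mem_range_algebraMap_of_pow_card_eq K (sub_eq_zero.1 ((hφ z).symm.trans hz))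
  have hrange : LinearMap.range φ ≤ LinearMap.ker (Algebra.trace K E) := by
    rintro _ ⟨z, rfl⟩
    rw [LinearMap.mem_ker, LinearMap.sub_apply, map_sub, AlgEquiv.toLinearMap_apply,
      Algebra.trace_eq_of_algEquiv, LinearMap.id_apply, sub_self]
  have hfinrank : Module.finrank K (LinearMap.ker (Algebra.trace K E)) ≤
      Module.finrank K (LinearMap.range φ) := by
    have hker := Submodule.finrank_mono hker
    rw [LinearMap.finrank_range_of_inj (algebraMap K E).injective, Module.finrank_self] at hker
    have hφ := φ.finrank_range_add_finrank_ker
    have htrace := (Algebra.trace K E).finrank_range_add_finrank_ker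
    rw [LinearMap.range_eq_top.2 (Algebra.trace_surjective K E), finrank_top,
      Module.finrank_self] at htrace
    omega
  obtain ⟨z, hz⟩ := (Submodule.eq_of_le_of_finrank_le hrange hfinrank).ge hx
  exact ⟨z, (hφ z).symm.trans hz⟩

end HilbertNinety

theorem norm_sum_comp_le {ι κ : Type*} [DecidableEq κ] {s : Finset ι} {t : Finset κ} {f : ι → κ}
    {w : κ → ℂ} {U : ℝ} (hf : ∀ i ∈ s, f i ∈ t) (hw : ∀ j ∈ t, ‖w j‖ ≤ 1)
    (hsum : ∑ j ∈ t, w j = 0) (hU : ∀ j ∈ t, ({i ∈ s | f i = j}.card : ℝ) ≤ U) :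
    ‖∑ i ∈ s, w (f i)‖ ≤ t.card * U - s.card := by
  let N (j : κ) : ℝ := {i ∈ s | f i = j}.card
  have hfib : ∑ i ∈ s, w (f i) = ∑ j ∈ t, ((N j - U : ℝ) : ℂ) * w j := by
    simp only [Complex.ofReal_sub, sub_mul, Finset.sum_sub_distrib, ← Finset.mul_sum, hsum,
      mul_zero, sub_zero]
    rw [← Finset.sum_fiberwise_of_maps_to hf]
    refine Finset.sum_congr rfl fun j _ => ?_
    rw [Finset.sum_congr rfl fun i hi => by rw [(Finset.mem_filter.1 hi).2]]
    simp [N]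
  calc ‖∑ i ∈ s, w (f i)‖ ≤ ∑ j ∈ t, (U - N j) := by
        rw [hfib]
        refine norm_sum_le_of_le _ fun j hj => ?_
        rw [norm_mul, Complex.norm_real, Real.norm_of_nonpos (sub_nonpos.2 (hU j hj)), neg_sub]
        exact mul_le_of_le_one_right (sub_nonneg.2 (hU j hj)) (hw j hj)
    _ = t.card * U - s.card := by
        rw [Finset.sum_sub_distrib, Finset.sum_const, nsmul_eq_mul,
          Finset.card_eq_sum_card_fiberwise hf]
        simp [N]

section NormTrace

variable (K : Type*) {E : Type*} [Field K] [Field E] [Algebra K E]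

variable [Fintype E]

open Classical in
/-- The nonzero `x : E` for which `x + x⁻¹` has norm `α` and `u * x + v * x⁻¹` has trace `β`. -/
noncomputable def normTraceFiber (u v : E) (α β : K) : Finset E :=
  {x | x ≠ 0 ∧ Algebra.norm K (x + x⁻¹) = α ∧ Algebra.trace K E (u * x + v * x⁻¹) = β}

variable {K} in
theorem mem_normTraceFiber {u v : E} {α β : K} {x : E} : x ∈ normTraceFiber K u v α β ↔
    x ≠ 0 ∧ Algebra.norm K (x + x⁻¹) = α ∧ Algebra.trace K E (u * x + v * x⁻¹) = β := by
  simp [normTraceFiber]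

variable [Fintype K]

omit [Fintype E] in
theorem exists_card_curve_points_eq [Finite E] {s : Finset E} {f g : E → E}
    (hf : ∀ x ∈ s, Algebra.norm K (f x) = 1) (hg : ∀ x ∈ s, Algebra.trace K E (g x) = 0) :
    ∃ T : Finset (E × E × E), T.card = s.card * ((Fintype.card K - 1) * Fintype.card K) ∧
      ∀ t ∈ T, t.1 ∈ s ∧ t.2.1 ^ (Fintype.card K - 1) = f t.1 ∧
        t.2.2 ^ Fintype.card K - t.2.2 = g t.1 := by
  classical
  choose! y hy0 hy using fun x hx => exists_pow_card_sub_one_eq K (hf x hx)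
  choose! z hz using fun x hx => exists_pow_card_sub_self_eq K (hg x hx)
  let point (w : E × Kˣ × K) : E × E × E :=
    (w.1, algebraMap K E w.2.1 * y w.1, z w.1 + algebraMap K E w.2.2)
  refine ⟨(s ×ˢ Finset.univ).image point, ?_, ?_⟩
  · have hinj : Set.InjOn point ↑(s ×ˢ (Finset.univ : Finset (Kˣ × K))) := by
      rintro ⟨x, c, c'⟩ hx ⟨x₂, e, e'⟩ - h
      obtain ⟨rfl, hc, hc'⟩ : x = x₂ ∧ algebraMap K E c * y x = algebraMap K E e * y x₂ ∧
          z x + algebraMap K E c' = z x₂ + algebraMap K E e' := by simpa [point] using h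
      have hx : x ∈ s := (Finset.mem_product.1 hx).1
      obtain rfl : c = e :=
        Units.ext ((algebraMap K E).injective (mul_right_cancel₀ (hy0 x hx) hc))
      rw [(algebraMap K E).injective (add_left_cancel hc')]
    rw [Finset.card_image_of_injOn hinj, Finset.card_product, Finset.card_univ, Fintype.card_prod,
      Fintype.card_units]
  · simp only [Finset.mem_image, Finset.mem_product, Finset.mem_univ, and_true]
    rintro _ ⟨⟨x, c, c'⟩, hx, rfl⟩
    refine ⟨hx, ?_, ?_⟩
    · simp only [point, mul_pow, hy x hx, ← map_pow,
        FiniteField.pow_card_sub_one_eq_one (c : K) c.ne_zero, map_one, one_mul]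
    · simp only [point, add_algebraMap_pow_card, ← hz x hx]
      ring

variable {K}

theorem card_normTraceFiber_mul_le {u : E} (hu : u ≠ 0) (v : E) {α : K} (hα : α ≠ 0) (β : K)
    {g l : ℕ} (hg : g = gapBound (Fintype.card K - 1) (Fintype.card K))
    (hE : Fintype.card E = (Fintype.card K ^ l) ^ 2) (hl : (g + 2) ^ 2 ≤ Fintype.card K ^ l) :
    (normTraceFiber K u v α β).card * ((Fintype.card K - 1) * Fintype.card K) ≤
      (Fintype.card K ^ l) ^ 2 + (2 * g + 2) * Fintype.card K ^ l := by
  subst hg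
  have hQ : 1 < Fintype.card K := Fintype.one_lt_card
  obtain ⟨p, _⟩ := CharP.exists K
  obtain ⟨e, hp, hcard⟩ := FiniteField.card K p
  have : Fact p.Prime := ⟨hp⟩
  have : CharP E p := charP_of_injective_algebraMap (algebraMap K E).injective p
  have hpow : Fintype.card K ^ l = p ^ (e * l) := by rw [hcard, pow_mul]
  obtain ⟨a, ha⟩ := FiniteField.norm_surjective K E α⁻¹
  obtain ⟨b, hb⟩ := Algebra.trace_surjective K E (-β)
  have ha0 : a ≠ 0 := Algebra.norm_ne_zero_iff.1 (ha ▸ inv_ne_zero hα)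
  obtain ⟨T, hT, hmem⟩ := exists_card_curve_points_eq K (s := normTraceFiber K u v α β)
    (f := fun x => a * (x + x⁻¹)) (g := fun x => u * x + v * x⁻¹ + b)
    (fun x hx => by rw [map_mul, ha, (mem_normTraceFiber.1 hx).2.1, inv_mul_cancel₀ hα])
    (fun x hx => by rw [map_add, hb, (mem_normTraceFiber.1 hx).2.2, add_neg_cancel])
  rw [← hT]
  rw [hpow] at hE hl ⊢
  have hcop : (Fintype.card K - 1).Coprime (Fintype.card K) :=
    (Nat.coprime_self_sub_left hQ.le).2 (Nat.coprime_one_left _)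
  exact card_curve_points_le (by omega) hQ hcop ha0 hu v b hE hl
    fun t ht => ⟨(mem_normTraceFiber.1 (hmem t ht).1).1, (hmem t ht).2⟩

end NormTrace

theorem card_add_inv_eq_zero_le {F : Type*} [Field F] {s : Finset F}
    (hs : ∀ x ∈ s, x + x⁻¹ = 0) : s.card ≤ 3 := by
  classical
  let f : Polynomial F := X * (X ^ 2 + C 1)
  have hf : f ≠ 0 := mul_ne_zero X_ne_zero (X_pow_add_C_ne_zero two_pos 1)
  have hdeg : f.natDegree ≤ 3 := by
    simp only [f]
    compute_degree
  refine (Finset.card_le_card fun x hx => ?_).trans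
    ((Multiset.toFinset_card_le _).trans ((card_roots' f).trans hdeg))
  rw [Multiset.mem_toFinset, mem_roots hf]
  rcases eq_or_ne x 0 with rfl | hx0
  · simp [f]
  · have := hs x hx
    field_simp at this
    simp [f, this]

theorem card_le_card_add_inv_ne_zero_add {F : Type*} [Field F] [Fintype F] [DecidableEq F] :
    Fintype.card F ≤ ({x : F | x + x⁻¹ ≠ 0} : Finset F).card + 3 := by
  rw [← Finset.card_univ, ← Finset.card_filter_add_card_filter_not fun x : F => x + x⁻¹ ≠ 0]
  exact Nat.add_le_add_left (card_add_inv_eq_zero_le (by simp)) _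

section CharacterSum

variable {K : Type*} (E : Type*) [Field K] [Fintype K] [Field E] [Fintype E] [Algebra K E]

variable {E} in
theorem norm_sum_normTrace_le {u : E} (hu : u ≠ 0) (v : E) {w : K → K → ℂ}
    (hw : ∀ α β, ‖w α β‖ ≤ 1) (hw0 : ∀ β, w 0 β = 0) (hsum : ∑ α, ∑ β, w α β = 0) {g l : ℕ}
    (hg : g = gapBound (Fintype.card K - 1) (Fintype.card K))
    (hE : Fintype.card E = (Fintype.card K ^ l) ^ 2) (hl : (g + 2) ^ 2 ≤ Fintype.card K ^ l) :
    ‖∑ x : E, w (Algebra.norm K (x + x⁻¹)) (Algebra.trace K E (u * x + v * x⁻¹))‖ ≤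
      (2 * g + 5) * (Fintype.card K : ℝ) ^ l := by
  classical
  set Q := Fintype.card K with hQ
  let f (x : E) : K × K := (Algebra.norm K (x + x⁻¹), Algebra.trace K E (u * x + v * x⁻¹))
  let s : Finset E := {x | x + x⁻¹ ≠ 0}
  let t : Finset (K × K) := {0}ᶜ ×ˢ Finset.univ
  have hmem {j : K × K} : j ∈ t ↔ j.1 ≠ 0 := by simp [t]
  have hf : ∀ x ∈ s, f x ∈ t := by
    simp [s, f, hmem, Algebra.norm_eq_zero_iff]
  have hreduce : ∑ x ∈ s, w (f x).1 (f x).2 = ∑ x : E, w (f x).1 (f x).2 := by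
    refine Finset.sum_subset (Finset.subset_univ _) fun x _ hx => ?_
    have hx : x + x⁻¹ = 0 := by simpa [s] using hx
    simp only [f, hx, Algebra.norm_zero, hw0]
  have hsum_t : ∑ j ∈ t, w j.1 j.2 = 0 := by
    rw [Finset.sum_product, ← hsum]
    refine Finset.sum_subset (Finset.subset_univ _) fun α _ hα => ?_
    obtain rfl : α = 0 := by simpa using hα
    exact Finset.sum_eq_zero fun β _ => hw0 β
  have ht : t.card = (Q - 1) * Q := by simp [t, Finset.card_compl, hQ]
  have ht0 : (0 : ℝ) < t.card := by
    have : 1 < Q := Fintype.one_lt_card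
    exact_mod_cast ht ▸ Nat.mul_pos (by omega) (by omega)
  have hU : ∀ j ∈ t, ({x ∈ s | f x = j}.card : ℝ) ≤
      ((Q ^ l) ^ 2 + (2 * g + 2) * Q ^ l : ℕ) / (t.card : ℝ) := by
    intro j hj
    rw [le_div_iff₀ ht0, ht]
    refine mod_cast (Nat.mul_le_mul_right _ (Finset.card_le_card fun x hx => ?_)).trans
      (card_normTraceFiber_mul_le hu v (hmem.1 hj) j.2 hg hE hl)
    obtain ⟨hx, rfl⟩ := Finset.mem_filter.1 hx
    refine mem_normTraceFiber.2 ⟨?_, rfl, rfl⟩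
    rintro rfl
    simp [s] at hx
  rw [← hreduce]
  refine (norm_sum_comp_le hf (fun j _ => hw j.1 j.2) hsum_t hU).trans ?_
  rw [mul_div_cancel₀ _ ht0.ne']
  have hs : ((Q : ℝ) ^ l) ^ 2 ≤ s.card + 3 :=
    mod_cast hE ▸ card_le_card_add_inv_ne_zero_add (F := E)
  have hone : (1 : ℝ) ≤ (Q : ℝ) ^ l := one_le_pow₀ (mod_cast Fintype.card_pos)
  push_cast
  linarith

/-- The character sum `∑ χ(N(x + x⁻¹)) ψ(Tr(u x + v x⁻¹))` over the extension `E` of `K`. -/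
noncomputable def charSum (χ : MulChar K ℂ) (ψ : AddChar K ℂ) (u v : K) : ℂ :=
  ∑ x : E, χ (Algebra.norm K (x + x⁻¹)) *
    ψ (Algebra.trace K E (algebraMap K E u * x + algebraMap K E v * x⁻¹))

omit [Fintype K] in
theorem charSum_swap (χ : MulChar K ℂ) (ψ : AddChar K ℂ) (u v : K) :
    charSum E χ ψ u v = charSum E χ ψ v u := by
  rw [charSum, ← Equiv.sum_comp (Equiv.inv E)]
  refine Finset.sum_congr rfl fun x _ => ?_
  rw [Equiv.inv_apply, inv_inv, add_comm x⁻¹ x, add_comm (_ * x⁻¹)]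

omit [Fintype K] in
theorem norm_mulChar_apply_le_one [Finite K] (χ : MulChar K ℂ) (x : K) : ‖χ x‖ ≤ 1 := by
  have := Fintype.ofFinite K
  rcases eq_or_ne x 0 with rfl | hx
  · simp [MulChar.map_zero]
  · have hpow : χ x ^ (Fintype.card K - 1) = 1 := by
      rw [← map_pow, FiniteField.pow_card_sub_one_eq_one x hx, map_one]
    exact (Complex.norm_eq_one_of_pow_eq_one hpow (Nat.sub_ne_zero_of_lt Fintype.one_lt_card)).le

theorem norm_charSum_le {χ : MulChar K ℂ} {ψ : AddChar K ℂ} (hψ : ψ ≠ 1) {u v : K}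
    (h : χ ≠ 1 ∨ u ≠ 0 ∨ v ≠ 0) {g l : ℕ}
    (hg : g = gapBound (Fintype.card K - 1) (Fintype.card K))
    (hE : Fintype.card E = (Fintype.card K ^ l) ^ 2) (hl : (g + 2) ^ 2 ≤ Fintype.card K ^ l) :
    ‖charSum E χ ψ u v‖ ≤ (2 * g + 5) * (Fintype.card K : ℝ) ^ l := by
  have bound_of_ne_zero {u v : K} (hu : u ≠ 0) :
      ‖charSum E χ ψ u v‖ ≤ (2 * g + 5) * (Fintype.card K : ℝ) ^ l := by
    refine norm_sum_normTrace_le (w := fun α β => χ α * ψ β) (by simpa using hu) _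
      (fun α β => ?_) (by simp [MulChar.map_zero]) ?_ hg hE hl
    · simpa using norm_mulChar_apply_le_one χ α
    · simp [← Finset.mul_sum, AddChar.sum_eq_zero_of_ne_one hψ]
  by_cases hu : u = 0
  · by_cases hv : v = 0
    · have hχ : χ ≠ 1 := by simpa [hu, hv] using h
      simpa [charSum, hu, hv] using norm_sum_normTrace_le (w := fun α _ => χ α)
        (one_ne_zero (α := E)) 0 (fun α _ => norm_mulChar_apply_le_one χ α)
        (by simp [MulChar.map_zero])
        (by simp [← Finset.mul_sum, MulChar.sum_eq_zero_of_ne_one hχ]) hg hE hl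
    · rw [charSum_swap]
      exact bound_of_ne_zero hv
  · exact bound_of_ne_zero hu

end CharacterSum

end

/-! ### The `L`-function of the character sum -/

section

open Polynomial

section NormAtI

variable {R S : Type*} [CommRing R] [CommRing S]

/-- The norm form `f(i) f(-i)`, where `i² = -1`, computed without adjoining `i` as the determinant
of `f` evaluated at a matrix of square `-1`. -/
noncomputable def normAtI : R[X] →* R :=
  Matrix.detMonoidHom.comp
    (aeval (!![0, -1; 1, 0] : Matrix (Fin 2) (Fin 2) R)).toRingHom.toMonoidHom

theorem normAtI_apply (f : R[X]) :
    normAtI f = (aeval (!![0, -1; 1, 0] : Matrix (Fin 2) (Fin 2) R) f).det := rfl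

theorem normAtI_X_sub_C (θ : R) : normAtI (X - C θ) = θ ^ 2 + 1 := by
  rw [normAtI_apply, Matrix.det_fin_two]
  simp [Matrix.algebraMap_matrix_apply]
  ring

theorem normAtI_add_mul (f g : R[X]) : normAtI (f + (X ^ 2 + 1) * g) = normAtI f := by
  have hroot : (!![0, -1; 1, 0] : Matrix (Fin 2) (Fin 2) R) ^ 2 + 1 = 0 := by
    rw [pow_two, Matrix.mul_fin_two, Matrix.one_fin_two]
    ext i j
    fin_cases i <;> fin_cases j <;> simp
  simp [normAtI_apply, hroot]

theorem normAtI_map (φ : R →+* S) (f : R[X]) : normAtI (f.map φ) = φ (normAtI f) := by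
  rw [normAtI_apply, normAtI_apply, RingHom.map_det]
  congr 1
  have hJ : φ.mapMatrix !![0, -1; 1, 0] = (!![0, -1; 1, 0] : Matrix (Fin 2) (Fin 2) S) := by
    ext i j
    fin_cases i <;> fin_cases j <;> simp
  rw [aeval_def, aeval_def, hom_eval₂, hJ, eval₂_map]
  congr 1
  ext c i j
  simp [Matrix.algebraMap_matrix_apply, apply_ite φ]

end NormAtI

section Weight

variable {K : Type*} [Field K] (χ : MulChar K ℂ) (ψ : AddChar K ℂ) (u v : K)

/-- The weight on monic polynomials which is multiplicative and takes the value
`χ(N(x + x⁻¹)) ψ(Tr(u x + v x⁻¹))` on the characteristic polynomial of `x ≠ 0`. If `f` has constant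
term zero, the weight of `f` is `0`, since `0⁻¹ = 0`. -/
noncomputable def weight (f : K[X]) : ℂ :=
  χ (normAtI f * ((-1) ^ f.natDegree * f.coeff 0)⁻¹) *
    ψ (u * -f.nextCoeff + v * -(f.coeff 1 / f.coeff 0))

theorem weight_one : weight χ ψ u v 1 = 1 := by
  simp [weight, coeff_one, nextCoeff]

variable {χ ψ u v} in
theorem weight_eq_zero {f : K[X]} (hf : f.coeff 0 = 0) : weight χ ψ u v f = 0 := by
  simp [weight, hf, MulChar.map_zero]

theorem weight_mul {f g : K[X]} (hf : f.Monic) (hg : g.Monic) :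
    weight χ ψ u v (f * g) = weight χ ψ u v f * weight χ ψ u v g := by
  by_cases hf0 : f.coeff 0 = 0
  · rw [weight_eq_zero hf0, weight_eq_zero (by rw [mul_coeff_zero, hf0, zero_mul]), zero_mul]
  by_cases hg0 : g.coeff 0 = 0
  · rw [weight_eq_zero hg0, weight_eq_zero (by rw [mul_coeff_zero, hg0, mul_zero]), mul_zero]
  have hmul : normAtI (f * g) * ((-1) ^ (f * g).natDegree * (f * g).coeff 0)⁻¹ =
      normAtI f * ((-1) ^ f.natDegree * f.coeff 0)⁻¹ *
        (normAtI g * ((-1) ^ g.natDegree * g.coeff 0)⁻¹) := by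
    rw [map_mul, hf.natDegree_mul hg, mul_coeff_zero, pow_add]
    field_simp
  have hadd : u * -(f * g).nextCoeff + v * -((f * g).coeff 1 / (f * g).coeff 0) =
      u * -f.nextCoeff + v * -(f.coeff 1 / f.coeff 0) +
        (u * -g.nextCoeff + v * -(g.coeff 1 / g.coeff 0)) := by
    rw [hf.nextCoeff_mul hg, mul_coeff_one, mul_coeff_zero]
    field_simp
    ring
  rw [weight, hmul, hadd, map_mul, AddChar.map_add_eq_mul, mul_mul_mul_comm, weight, weight]

end Weight

section ProdXSubC

variable {k ι : Type*} [Field k] (s : Finset ι) (θ : ι → k)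

theorem coeff_zero_prod_X_sub_C :
    (∏ i ∈ s, (X - C (θ i))).coeff 0 = (-1) ^ s.card * ∏ i ∈ s, θ i := by
  simp [coeff_zero_eq_eval_zero, eval_prod, Finset.prod_neg]

variable {s θ} in
theorem coeff_one_div_coeff_zero_prod_X_sub_C (hθ : ∀ i ∈ s, θ i ≠ 0) :
    (∏ i ∈ s, (X - C (θ i))).coeff 1 / (∏ i ∈ s, (X - C (θ i))).coeff 0 = -∑ i ∈ s, (θ i)⁻¹ := by
  have heval : (∏ i ∈ s, (X - C (θ i))).eval 0 ≠ 0 := by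
    simpa [eval_prod, Finset.prod_ne_zero_iff] using hθ
  have hsplits : (∏ i ∈ s, (X - C (θ i))).Splits := Splits.prod fun i _ => Splits.X_sub_C _
  have hlog := hsplits.eval_derivative_div_eval_of_ne_zero heval
  have hroots : (∏ i ∈ s, (X - C (θ i))).roots = s.val.map θ := by
    rw [roots_prod _ _ (Finset.prod_ne_zero_iff.2 fun i _ => X_sub_C_ne_zero _)]
    simp only [roots_X_sub_C, Multiset.bind_singleton]
  rw [← coeff_zero_eq_eval_zero, ← coeff_zero_eq_eval_zero, coeff_derivative, hroots] at hlog
  simpa [← Finset.sum_eq_multiset_sum, Multiset.map_map] using hlog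

end ProdXSubC

end

section

open Polynomial UniqueFactorizationMonoid

section VonMangoldt

variable {K : Type*} [Field K]

open Classical in
/-- The von Mangoldt function of the polynomial ring: `deg P` at powers of an irreducible `P`, and
`0` elsewhere. -/
noncomputable def vonMangoldt (f : K[X]) : ℕ :=
  if IsPrimePow f then (radical f).natDegree else 0

theorem vonMangoldt_pow {P : K[X]} (hP : Irreducible P) {k : ℕ} (hk : k ≠ 0) :
    vonMangoldt (P ^ k) = P.natDegree := by
  classical
  rw [vonMangoldt, if_pos (hP.prime.isPrimePow.pow hk), radical_pow_of_prime hP.prime hk,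
    natDegree_eq_of_degree_eq degree_normalize]

open Classical in
theorem monic_of_mem_normalizedFactors {f P : K[X]} (hP : P ∈ normalizedFactors f) : P.Monic :=
  normalize_normalized_factor P hP ▸ monic_normalize (irreducible_of_normalized_factor P hP).ne_zero

open Classical in
theorem pow_dvd_iff_le_count_normalizedFactors {f P : K[X]} (hf : f ≠ 0) (hP : P.Monic)
    (hirr : Irreducible P) {k : ℕ} : P ^ k ∣ f ↔ k ≤ (normalizedFactors f).count P := by
  rw [pow_dvd_iff_le_emultiplicity, emultiplicity_eq_count_normalizedFactors hirr hf,
    hP.normalize_eq_self, Nat.cast_le]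

theorem exists_monic_irreducible_pow_eq {g : K[X]} (hg : g.Monic) (hpow : IsPrimePow g) :
    ∃ P : K[X], P.Monic ∧ Irreducible P ∧ ∃ k ≠ 0, P ^ k = g := by
  classical
  obtain ⟨P, k, hP, hk, rfl⟩ := hpow
  refine ⟨normalize P, monic_normalize hP.ne_zero, (normalize_associated P).symm.irreducible
    hP.irreducible, k, hk.ne', ?_⟩
  exact eq_of_monic_of_associated ((monic_normalize hP.ne_zero).pow k) hg
    (normalize_associated P).pow_pow

theorem eq_of_irreducible_of_pow_eq_pow {P Q : K[X]} (hP : P.Monic) (hQ : Q.Monic)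
    (hPirr : Irreducible P) (hQirr : Irreducible Q) {j k : ℕ} (hj : j ≠ 0) (h : P ^ j = Q ^ k) :
    P = Q :=
  eq_of_monic_of_associated hP hQ <| hPirr.associated_of_dvd hQirr <|
    hPirr.prime.dvd_of_dvd_pow (h ▸ dvd_pow_self P hj)

open Classical in
theorem sum_count_normalizedFactors_mul_natDegree {f : K[X]} (hf : f.Monic) :
    ∑ P ∈ (normalizedFactors f).toFinset, (normalizedFactors f).count P * P.natDegree =
      f.natDegree := by
  have hprod : (normalizedFactors f).prod = f := by
    rw [prod_normalizedFactors_eq hf.ne_zero, hf.normalize_eq_self]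
  have hdeg := natDegree_multiset_prod_of_monic _ fun P => monic_of_mem_normalizedFactors (f := f)
  rw [hprod, Finset.sum_multiset_map_count] at hdeg
  simpa only [smul_eq_mul] using hdeg.symm

theorem sum_vonMangoldt {f : K[X]} (hf : f.Monic) {s : Finset K[X]}
    (hs : ∀ g, g ∈ s ↔ g.Monic ∧ g ∣ f) : ∑ g ∈ s, vonMangoldt g = f.natDegree := by
  classical
  let I : Finset (Σ _ : K[X], ℕ) := (normalizedFactors f).toFinset.sigma fun P =>
    Finset.Icc 1 ((normalizedFactors f).count P)
  have hI {p : Σ _ : K[X], ℕ} (hp : p ∈ I) : p.1.Monic ∧ Irreducible p.1 ∧ p.2 ≠ 0 ∧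
      p.1 ^ p.2 ∣ f := by
    obtain ⟨hP, hk⟩ := Finset.mem_sigma.1 hp
    rw [Multiset.mem_toFinset] at hP
    rw [Finset.mem_Icc] at hk
    have hmonic := monic_of_mem_normalizedFactors hP
    have hirr := irreducible_of_normalized_factor _ hP
    exact ⟨hmonic, hirr, by omega,
      (pow_dvd_iff_le_count_normalizedFactors hf.ne_zero hmonic hirr).2 hk.2⟩
  have hinj : Set.InjOn (fun p : Σ _ : K[X], ℕ => p.1 ^ p.2) I := by
    rintro ⟨P, j⟩ hP ⟨Q, k⟩ hQ h
    obtain ⟨hPm, hPirr, hj, -⟩ := hI hP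
    obtain ⟨hQm, hQirr, -, -⟩ := hI hQ
    obtain rfl : P = Q := eq_of_irreducible_of_pow_eq_pow hPm hQm hPirr hQirr hj h
    obtain rfl : j = k :=
      pow_injective_of_not_isUnit hPirr.not_isUnit hPm.ne_zero h
    rfl
  have himage : I.image (fun p => p.1 ^ p.2) ⊆ s := by
    intro g hg
    obtain ⟨p, hp, rfl⟩ := Finset.mem_image.1 hg
    exact (hs _).2 ⟨(hI hp).1.pow _, (hI hp).2.2.2⟩
  rw [← Finset.sum_subset himage fun g hg hgI => ?_, Finset.sum_image hinj,
    Finset.sum_congr rfl fun p hp => vonMangoldt_pow (hI hp).2.1 (hI hp).2.2.1, Finset.sum_sigma]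
  · simpa using sum_count_normalizedFactors_mul_natDegree hf
  · refine if_neg fun hpow => hgI ?_
    obtain ⟨hg, hdvd⟩ := (hs g).1 hg
    obtain ⟨P, hP, hirr, k, hk, rfl⟩ := exists_monic_irreducible_pow_eq hg hpow
    have hle := (pow_dvd_iff_le_count_normalizedFactors hf.ne_zero hP hirr).1 hdvd
    refine Finset.mem_image.2 ⟨⟨P, k⟩, Finset.mem_sigma.2 ⟨?_, ?_⟩, rfl⟩
    · exact Multiset.mem_toFinset.2 (Multiset.count_pos.1 ((Nat.pos_of_ne_zero hk).trans_le hle))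
    · exact Finset.mem_Icc.2 ⟨Nat.one_le_iff_ne_zero.2 hk, hle⟩

end VonMangoldt

section FieldPoly

variable (K : Type*) {E : Type*} [Field K] [Field E] [Finite E] [Algebra K E]

/-- The characteristic polynomial of `x` over `K`, written as a power of the minimal polynomial so
that the elements with a given `fieldPoly` can be counted. -/
noncomputable def fieldPoly (x : E) : K[X] :=
  minpoly K x ^ (Module.finrank K E / (minpoly K x).natDegree)

theorem monic_fieldPoly (x : E) : (fieldPoly K x).Monic :=
  (minpoly.monic (Algebra.IsIntegral.isIntegral x)).pow _

theorem exists_minpoly_pow_map_eq_prod (x : E) :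
    ∃ j, (minpoly K x ^ j).map (algebraMap K E) = ∏ g : Gal(E/K), (X - C (g x)) := by
  classical
  obtain ⟨F, hmap, -, hF⟩ := lifts_and_natDegree_eq_and_monic
    (Algebra.IsInvariant.charpoly_mem_lifts K E Gal(E/K) x)
    (MulSemiringAction.monic_charpoly Gal(E/K) x)
  have hsplits : (F.map (algebraMap K E)).Splits := hmap ▸ MulSemiringAction.splits_charpoly _ x
  rw [MulSemiringAction.charpoly_eq] at hmap
  have hfactor : ∀ p ∈ normalizedFactors F, p = minpoly K x := by
    intro p hp
    have hirr := irreducible_of_normalized_factor p hp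
    have hdvd := Polynomial.map_dvd (algebraMap K E) (dvd_of_mem_normalizedFactors hp)
    obtain ⟨y, hy⟩ := (Splits.of_dvd hsplits (hF.map _).ne_zero hdvd).exists_eval_eq_zero
      (by rw [degree_map]; exact hirr.degree_pos.ne')
    have hFy := eval_eq_zero_of_dvd_of_eval_eq_zero hdvd hy
    obtain ⟨g, -, hg⟩ : ∃ g ∈ (Finset.univ : Finset Gal(E/K)), (X - C (g • x)).eval y = 0 := by
      rwa [hmap, eval_prod, Finset.prod_eq_zero_iff] at hFy
    obtain rfl : y = g x := by simpa [sub_eq_zero] using hg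
    have hroot : aeval (g x) p = 0 := by rwa [aeval_def, ← eval_map]
    rw [minpoly.eq_of_irreducible_of_monic hirr hroot (monic_of_mem_normalizedFactors hp),
      minpoly.algEquiv_eq g x]
  refine ⟨Multiset.card (normalizedFactors F), ?_⟩
  rw [← Multiset.prod_replicate, ← Multiset.eq_replicate_card.2 hfactor,
    prod_normalizedFactors_eq hF.ne_zero, hF.normalize_eq_self]
  exact hmap

theorem natDegree_minpoly_dvd_finrank (x : E) :
    (minpoly K x).natDegree ∣ Module.finrank K E := by
  rw [← IntermediateField.adjoin.finrank (Algebra.IsIntegral.isIntegral x)]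
  exact Dvd.intro _ (Module.finrank_mul_finrank K _ E)

theorem natDegree_fieldPoly (x : E) : (fieldPoly K x).natDegree = Module.finrank K E := by
  rw [fieldPoly, natDegree_pow, Nat.div_mul_cancel (natDegree_minpoly_dvd_finrank K x)]

theorem map_fieldPoly (x : E) :
    (fieldPoly K x).map (algebraMap K E) = ∏ g : Gal(E/K), (X - C (g x)) := by
  obtain ⟨j, hj⟩ := exists_minpoly_pow_map_eq_prod K x
  have hdeg := congrArg natDegree hj
  rw [natDegree_map, natDegree_pow, natDegree_finsetProd_X_sub_C_eq_card, Finset.card_univ,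
    ← Nat.card_eq_fintype_card, IsGalois.card_aut_eq_finrank] at hdeg
  rw [fieldPoly, ← hdeg,
    Nat.mul_div_cancel _ (minpoly.natDegree_pos (Algebra.IsIntegral.isIntegral x)), hj]

theorem neg_one_pow_mul_coeff_zero_fieldPoly (x : E) :
    (-1) ^ (fieldPoly K x).natDegree * (fieldPoly K x).coeff 0 = Algebra.norm K x := by
  apply (algebraMap K E).injective
  rw [Algebra.norm_eq_prod_automorphisms, map_mul, ← coeff_map, map_fieldPoly,
    coeff_zero_prod_X_sub_C, natDegree_fieldPoly, Finset.card_univ, ← Nat.card_eq_fintype_card,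
    IsGalois.card_aut_eq_finrank, map_pow, map_neg, map_one, ← mul_assoc, ← mul_pow]
  simp

theorem neg_nextCoeff_fieldPoly (x : E) : -(fieldPoly K x).nextCoeff = Algebra.trace K E x := by
  apply (algebraMap K E).injective
  rw [trace_eq_sum_automorphisms, map_neg, ← nextCoeff_map (algebraMap K E).injective,
    map_fieldPoly, prod_X_sub_C_nextCoeff, neg_neg]

variable {K} {x : E}

theorem neg_coeff_one_div_coeff_zero_fieldPoly (hx : x ≠ 0) :
    -((fieldPoly K x).coeff 1 / (fieldPoly K x).coeff 0) = Algebra.trace K E x⁻¹ := by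
  apply (algebraMap K E).injective
  rw [trace_eq_sum_automorphisms, map_neg, map_div₀, ← coeff_map, ← coeff_map, map_fieldPoly,
    coeff_one_div_coeff_zero_prod_X_sub_C (by simpa using hx), neg_neg]
  simp only [map_inv₀]

theorem normAtI_fieldPoly : normAtI (fieldPoly K x) = Algebra.norm K (x ^ 2 + 1) := by
  apply (algebraMap K E).injective
  rw [Algebra.norm_eq_prod_automorphisms, ← normAtI_map, map_fieldPoly, map_prod]
  simp [normAtI_X_sub_C]

theorem weight_fieldPoly (χ : MulChar K ℂ) (ψ : AddChar K ℂ) (u v : K) (x : E) :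
    weight χ ψ u v (fieldPoly K x) = χ (Algebra.norm K (x + x⁻¹)) *
      ψ (Algebra.trace K E (algebraMap K E u * x + algebraMap K E v * x⁻¹)) := by
  rcases eq_or_ne x 0 with rfl | hx
  · rw [weight_eq_zero]
    · simp [Algebra.norm_zero, MulChar.map_zero]
    · simp [fieldPoly, minpoly.zero, Module.finrank_pos.ne]
  · have hdiv : (x ^ 2 + 1) * x⁻¹ = x + x⁻¹ := by field_simp
    rw [weight, normAtI_fieldPoly, neg_one_pow_mul_coeff_zero_fieldPoly, neg_nextCoeff_fieldPoly,
      neg_coeff_one_div_coeff_zero_fieldPoly hx, ← Algebra.norm_inv, ← map_mul, hdiv,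
      (Algebra.trace K E).map_add, ← Algebra.smul_def, ← Algebra.smul_def, map_smul, map_smul,
      smul_eq_mul, smul_eq_mul]

end FieldPoly

end

section

open Polynomial UniqueFactorizationMonoid

section MonicOfDegree

variable (K : Type*) [Field K] [Finite K]

theorem finite_setOf_monic_natDegree_eq (D : ℕ) :
    {f : K[X] | f.Monic ∧ f.natDegree = D}.Finite := by
  refine Set.Finite.of_finite_image (f := fun f (i : Fin D) => f.coeff i) (Set.toFinite _) ?_
  rintro f ⟨hf, rfl⟩ g ⟨hg, hdeg⟩ h
  rw [hf.as_sum, hg.as_sum, hdeg, Finset.sum_range, Finset.sum_range]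
  simp only [congrFun h]

/-- The monic polynomials of degree `D`. -/
noncomputable def monicOfDegree (D : ℕ) : Finset K[X] :=
  (finite_setOf_monic_natDegree_eq K D).toFinset

variable {K}

theorem mem_monicOfDegree {D : ℕ} {f : K[X]} :
    f ∈ monicOfDegree K D ↔ f.Monic ∧ f.natDegree = D := by
  simp [monicOfDegree]

theorem monicOfDegree_zero : monicOfDegree K 0 = {1} := by
  ext f
  rw [mem_monicOfDegree, Finset.mem_singleton]
  exact ⟨fun ⟨hf, h⟩ => hf.natDegree_eq_zero.1 h, fun h => h ▸ ⟨monic_one, natDegree_one⟩⟩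

theorem add_mem_monicOfDegree {D : ℕ} {f g : K[X]} (hf : f ∈ monicOfDegree K D)
    (hg : g.degree < D) : f + g ∈ monicOfDegree K D := by
  rw [mem_monicOfDegree] at hf ⊢
  have hlt : g.degree < f.degree := by rwa [degree_eq_natDegree hf.1.ne_zero, hf.2]
  exact ⟨hf.1.add_of_left hlt, by rw [natDegree_add_eq_left_of_degree_lt hlt, hf.2]⟩

/-- The coefficient of `T ^ D` in the `L`-series `∑ w(f) T ^ deg f` over monic `f`. -/
noncomputable def monicSum (w : K[X] → ℂ) (D : ℕ) : ℂ :=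
  ∑ f ∈ monicOfDegree K D, w f

/-- The coefficient of `T ^ D` in the logarithmic derivative `T L' / L` of the `L`-series of a
multiplicative weight `w`. -/
noncomputable def primePowerSum (w : K[X] → ℂ) (D : ℕ) : ℂ :=
  ∑ f ∈ monicOfDegree K D, vonMangoldt f * w f

variable {w : K[X] → ℂ}

theorem monicSum_zero : monicSum w 0 = w 1 := by
  rw [monicSum, monicOfDegree_zero, Finset.sum_singleton]

open Classical in
theorem sum_monicOfDegree_factorizations (D : ℕ) (F : K[X] → K[X] → ℂ) :
    ∑ p ∈ Finset.HasAntidiagonal.antidiagonal D,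
      ∑ g ∈ monicOfDegree K p.1, ∑ h ∈ monicOfDegree K p.2, F g (g * h) =
    ∑ f ∈ monicOfDegree K D, ∑ g ∈ (Finset.range (D + 1)).biUnion (monicOfDegree K) with g ∣ f,
      F g f := by
  simp_rw [Finset.sum_sigma']
  refine Finset.sum_bij (fun x _ => ⟨x.2.1 * x.2.2, x.2.1⟩) ?_ ?_ ?_ (fun _ _ => rfl)
  · rintro ⟨⟨i, j⟩, g, h⟩ hx
    simp only [Finset.mem_sigma, Finset.HasAntidiagonal.mem_antidiagonal, mem_monicOfDegree,
      Finset.mem_filter, Finset.mem_biUnion, Finset.mem_range] at hx ⊢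
    obtain ⟨rfl, ⟨hg, rfl⟩, hh, rfl⟩ := hx
    exact ⟨⟨hg.mul hh, hg.natDegree_mul hh⟩, ⟨_, by omega, hg, rfl⟩, dvd_mul_right g h⟩
  · rintro ⟨⟨i, j⟩, g, h⟩ hx ⟨⟨i', j'⟩, g', h'⟩ hx' heq
    simp only [Finset.mem_sigma, Finset.HasAntidiagonal.mem_antidiagonal, mem_monicOfDegree]
      at hx hx'
    simp only [Sigma.mk.injEq, heq_eq_eq] at heq
    obtain ⟨-, ⟨hg, rfl⟩, -, rfl⟩ := hx
    obtain ⟨-, ⟨-, rfl⟩, -, rfl⟩ := hx'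
    obtain ⟨hmul, rfl⟩ := heq
    obtain rfl := mul_left_cancel₀ hg.ne_zero hmul
    rfl
  · rintro ⟨f, g⟩ hx
    simp only [Finset.mem_sigma, mem_monicOfDegree, Finset.mem_filter, Finset.mem_biUnion] at hx
    obtain ⟨⟨hf, rfl⟩, ⟨i, -, hg, -⟩, h, rfl⟩ := hx
    have hh := hg.of_mul_monic_left hf
    refine ⟨⟨(g.natDegree, h.natDegree), g, h⟩, ?_, rfl⟩
    simp only [Finset.mem_sigma, Finset.HasAntidiagonal.mem_antidiagonal, mem_monicOfDegree]
    exact ⟨(hg.natDegree_mul hh).symm, ⟨hg, trivial⟩, hh, trivial⟩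

theorem natCast_mul_monicSum
    (hw : ∀ f g : K[X], f.Monic → g.Monic → w (f * g) = w f * w g) (D : ℕ) :
    D * monicSum w D =
      ∑ p ∈ Finset.HasAntidiagonal.antidiagonal D, primePowerSum w p.1 * monicSum w p.2 := by
  classical
  have hdegree : ∀ f ∈ monicOfDegree K D,
      ∑ g ∈ (Finset.range (D + 1)).biUnion (monicOfDegree K) with g ∣ f, vonMangoldt g = D := by
    intro f hf
    obtain ⟨hmonic, rfl⟩ := mem_monicOfDegree.1 hf
    refine sum_vonMangoldt hmonic fun g => ?_
    simp only [Finset.mem_filter, Finset.mem_biUnion, Finset.mem_range, mem_monicOfDegree]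
    exact ⟨fun ⟨⟨_, _, hg, _⟩, hdvd⟩ => ⟨hg, hdvd⟩, fun ⟨hg, hdvd⟩ =>
      ⟨⟨_, Nat.lt_succ_of_le (natDegree_le_of_dvd hdvd hmonic.ne_zero), hg, rfl⟩, hdvd⟩⟩
  calc D * monicSum w D
      = ∑ f ∈ monicOfDegree K D,
          ∑ g ∈ (Finset.range (D + 1)).biUnion (monicOfDegree K) with g ∣ f,
            vonMangoldt g * w f := by
        rw [monicSum, Finset.mul_sum]
        refine Finset.sum_congr rfl fun f hf => ?_
        rw [← Finset.sum_mul, ← Nat.cast_sum, hdegree f hf]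
    _ = ∑ p ∈ Finset.HasAntidiagonal.antidiagonal D,
          ∑ g ∈ monicOfDegree K p.1, ∑ h ∈ monicOfDegree K p.2, vonMangoldt g * w (g * h) :=
        (sum_monicOfDegree_factorizations D fun g f => vonMangoldt g * w f).symm
    _ = ∑ p ∈ Finset.HasAntidiagonal.antidiagonal D, primePowerSum w p.1 * monicSum w p.2 := by
        refine Finset.sum_congr rfl fun p _ => ?_
        rw [primePowerSum, monicSum, Finset.sum_mul_sum]
        refine Finset.sum_congr rfl fun g hg => Finset.sum_congr rfl fun h hh => ?_
        rw [hw g h (mem_monicOfDegree.1 hg).1 (mem_monicOfDegree.1 hh).1, mul_assoc]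

end MonicOfDegree

section Counting

variable {K : Type*} (E : Type*) [Field K] [Finite K] [Field E] [Fintype E] [Algebra K E]

omit [Fintype E] in
theorem splits_map_of_natDegree_dvd_finrank [Finite E] {P : K[X]} (hP : Irreducible P)
    (hdvd : P.natDegree ∣ Module.finrank K E) : (P.map (algebraMap K E)).Splits := by
  have := Fintype.ofFinite E
  have hsplits := (FiniteField.isSplittingField_sub E K).splits'
  rw [← Nat.card_eq_fintype_card, Module.natCard_eq_pow_finrank (K := K) (V := E)] at hsplits
  have hne : (X ^ Nat.card K ^ Module.finrank K E - X : K[X]) ≠ 0 :=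
    FiniteField.X_pow_card_sub_X_ne_zero K
      (Nat.one_lt_pow Module.finrank_pos.ne' Finite.one_lt_card)
  exact hsplits.of_dvd ((Polynomial.map_ne_zero_iff (algebraMap K E).injective).2 hne)
    (Polynomial.map_dvd _ (hP.natDegree_dvd_iff_dvd_X_pow_card_pow_sub_X.1 hdvd))

open Classical in
theorem card_minpoly_eq {P : K[X]} (hP : P.Monic) (hirr : Irreducible P)
    (hdvd : P.natDegree ∣ Module.finrank K E) :
    ({x : E | minpoly K x = P} : Finset E).card = P.natDegree := by
  rw [← card_rootSet_eq_natDegree (PerfectField.separable_of_irreducible hirr)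
    (splits_map_of_natDegree_dvd_finrank E hirr hdvd), ← Fintype.card_subtype]
  refine Fintype.card_congr (Equiv.subtypeEquivRight fun x => ?_)
  rw [mem_rootSet]
  constructor
  · rintro rfl
    exact ⟨hP.ne_zero, minpoly.aeval K x⟩
  · rintro ⟨-, h⟩
    exact (minpoly.eq_of_irreducible_of_monic hirr h hP).symm

open Classical in
theorem card_fieldPoly_eq {f : K[X]} (hf : f ∈ monicOfDegree K (Module.finrank K E)) :
    ({x : E | fieldPoly K x = f} : Finset E).card = vonMangoldt f := by
  obtain ⟨hf, hdeg⟩ := mem_monicOfDegree.1 hf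
  have hintegral (x : E) : IsIntegral K x := Algebra.IsIntegral.isIntegral x
  have hexp (x : E) : Module.finrank K E / (minpoly K x).natDegree ≠ 0 := by
    intro h
    have := natDegree_fieldPoly K x
    rw [fieldPoly, h, pow_zero, natDegree_one] at this
    exact Module.finrank_pos.ne this
  by_cases hpow : IsPrimePow f
  · obtain ⟨P, hP, hirr, k, hk, rfl⟩ := exists_monic_irreducible_pow_eq hf hpow
    rw [natDegree_pow] at hdeg
    rw [vonMangoldt_pow hirr hk, ← card_minpoly_eq E hP hirr (Dvd.intro_left _ hdeg)]
    refine congrArg Finset.card (Finset.filter_congr fun x _ => ⟨fun h => ?_, ?_⟩)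
    · exact eq_of_irreducible_of_pow_eq_pow (minpoly.monic (hintegral x)) hP
        (minpoly.irreducible (hintegral x)) hirr (hexp x) h
    · rintro rfl
      rw [fieldPoly, ← hdeg, Nat.mul_div_cancel _ (minpoly.natDegree_pos (hintegral x))]
  · rw [vonMangoldt, if_neg hpow, Finset.card_eq_zero, Finset.filter_eq_empty_iff]
    rintro x - rfl
    exact hpow ((minpoly.irreducible (hintegral x)).prime.isPrimePow.pow (hexp x))

theorem charSum_eq_primePowerSum (χ : MulChar K ℂ) (ψ : AddChar K ℂ) (u v : K) :
    charSum E χ ψ u v = primePowerSum (weight χ ψ u v) (Module.finrank K E) := by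
  classical
  have hmaps : ∀ x ∈ (Finset.univ : Finset E),
      fieldPoly K x ∈ monicOfDegree K (Module.finrank K E) :=
    fun x _ => mem_monicOfDegree.2 ⟨monic_fieldPoly K x, natDegree_fieldPoly K x⟩
  simp_rw [charSum, ← weight_fieldPoly]
  rw [← Finset.sum_fiberwise_of_maps_to' hmaps (weight χ ψ u v), primePowerSum]
  refine Finset.sum_congr rfl fun f hf => ?_
  rw [Finset.sum_const, nsmul_eq_mul, card_fieldPoly_eq E hf]

end Counting

section Vanishing

theorem sum_eq_zero_of_map_eq_mul {ι : Type*} {s : Finset ι} {w : ι → ℂ} {φ : ι → ι} {c : ℂ}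
    (hφ : Set.MapsTo φ s s) (hinj : Set.InjOn φ s) (hc : c ≠ 1)
    (hw : ∀ i ∈ s, w (φ i) = c * w i) : ∑ i ∈ s, w i = 0 := by
  have hsum : ∑ i ∈ s, w i = c * ∑ i ∈ s, w i := by
    rw [Finset.mul_sum, ← Finset.sum_congr rfl hw]
    exact (Finset.sum_nbij φ hφ hinj (Finset.surjOn_of_injOn_of_card_le φ hφ hinj le_rfl)
      fun _ _ => rfl).symm
  have : (1 - c) * ∑ i ∈ s, w i = 0 := by rw [sub_mul, one_mul, ← hsum, sub_self]
  exact (mul_eq_zero.1 this).resolve_left (sub_ne_zero.2 hc.symm)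

variable {K : Type*} [Field K]

theorem degree_X_sq_add_one_mul_lt {D j : ℕ} (c : K) (hj : j + 2 < D) :
    ((X ^ 2 + 1) * (C c * X ^ j) : K[X]).degree < D := by
  refine lt_of_le_of_lt (b := ((j + 2 : ℕ) : WithBot ℕ)) ?_ (mod_cast hj)
  rw [add_comm j 2, Nat.cast_add]
  compute_degree
  exact le_rfl

theorem coeff_add_X_sq_add_one_mul (f : K[X]) (j i : ℕ) (c : K) :
    (f + (X ^ 2 + 1) * (C c * X ^ j)).coeff i =
      f.coeff i + ((if i = j + 2 then c else 0) + (if i = j then c else 0)) := by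
  have hexpand : ((X ^ 2 + 1) * (C c * X ^ j) : K[X]) = C c * X ^ (j + 2) + C c * X ^ j := by ring
  rw [hexpand, coeff_add, coeff_add, coeff_C_mul_X_pow, coeff_C_mul_X_pow]

variable [Finite K] {D : ℕ} {χ : MulChar K ℂ} {ψ : AddChar K ℂ} {u v : K}

theorem nextCoeff_eq_of_mem_monicOfDegree (hD : D ≠ 0) {f : K[X]} (hf : f ∈ monicOfDegree K D) :
    f.nextCoeff = f.coeff (D - 1) := by
  obtain ⟨-, rfl⟩ := mem_monicOfDegree.1 hf
  exact nextCoeff_of_natDegree_pos (Nat.pos_of_ne_zero hD)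

theorem monicSum_eq_zero_of_left_ne_zero (hψ : ψ ≠ 1) (hu : u ≠ 0) (hD : 5 ≤ D) :
    monicSum (weight χ ψ u v) D = 0 := by
  obtain ⟨t, ht⟩ := AddChar.ne_one_iff.1 hψ
  let φ (f : K[X]) : K[X] := f + (X ^ 2 + 1) * (C (-(t / u)) * X ^ (D - 3))
  have hmaps : ∀ f ∈ monicOfDegree K D, φ f ∈ monicOfDegree K D := fun f hf =>
    add_mem_monicOfDegree hf (degree_X_sq_add_one_mul_lt _ (by omega))
  have hcoeff (f : K[X]) : (φ f).coeff 0 = f.coeff 0 ∧ (φ f).coeff 1 = f.coeff 1 ∧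
      (φ f).coeff (D - 1) = f.coeff (D - 1) + -(t / u) := by
    obtain ⟨d, rfl⟩ := Nat.exists_eq_add_of_le' hD
    simp only [φ, coeff_add_X_sq_add_one_mul]
    simp
  refine sum_eq_zero_of_map_eq_mul hmaps (add_left_injective _).injOn ht fun f hf => ?_
  have hD0 : D ≠ 0 := by omega
  have harg : u * -(f.coeff (D - 1) + -(t / u)) + v * -(f.coeff 1 / f.coeff 0) =
      t + (u * -f.coeff (D - 1) + v * -(f.coeff 1 / f.coeff 0)) := by
    field_simp
    ring
  rw [weight, weight, nextCoeff_eq_of_mem_monicOfDegree hD0 (hmaps f hf),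
    nextCoeff_eq_of_mem_monicOfDegree hD0 hf, (mem_monicOfDegree.1 (hmaps f hf)).2,
    (mem_monicOfDegree.1 hf).2, (hcoeff f).1, (hcoeff f).2.1, (hcoeff f).2.2, normAtI_add_mul, harg,
    AddChar.map_add_eq_mul, mul_left_comm]

theorem monicSum_eq_zero_of_right_ne_zero (hψ : ψ ≠ 1) (hv : v ≠ 0) (hD : 5 ≤ D) :
    monicSum (weight χ ψ u v) D = 0 := by
  obtain ⟨t, ht⟩ := AddChar.ne_one_iff.1 hψ
  let φ (f : K[X]) : K[X] := f + (X ^ 2 + 1) * (C (-(t / v) * f.coeff 0) * X ^ 1)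
  have hmaps : ∀ f ∈ monicOfDegree K D, φ f ∈ monicOfDegree K D := fun f hf =>
    add_mem_monicOfDegree hf (degree_X_sq_add_one_mul_lt _ (by omega))
  have hcoeff (f : K[X]) : (φ f).coeff 0 = f.coeff 0 ∧
      (φ f).coeff 1 = f.coeff 1 + -(t / v) * f.coeff 0 ∧
      (φ f).coeff (D - 1) = f.coeff (D - 1) := by
    obtain ⟨d, rfl⟩ := Nat.exists_eq_add_of_le' hD
    simp only [φ, coeff_add_X_sq_add_one_mul]
    simp
  have hinj : Function.Injective φ := fun f g h => by
    have h0 : f.coeff 0 = g.coeff 0 := by rw [← (hcoeff f).1, h, (hcoeff g).1]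
    simpa [φ, h0] using h
  refine sum_eq_zero_of_map_eq_mul hmaps hinj.injOn ht fun f hf => ?_
  by_cases h0 : f.coeff 0 = 0
  · rw [weight_eq_zero h0, weight_eq_zero ((hcoeff f).1.trans h0), mul_zero]
  have hD0 : D ≠ 0 := by omega
  have harg : u * -f.coeff (D - 1) + v * -((f.coeff 1 + -(t / v) * f.coeff 0) / f.coeff 0) =
      t + (u * -f.coeff (D - 1) + v * -(f.coeff 1 / f.coeff 0)) := by
    field_simp
    ring
  rw [weight, weight, nextCoeff_eq_of_mem_monicOfDegree hD0 (hmaps f hf),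
    nextCoeff_eq_of_mem_monicOfDegree hD0 hf, (mem_monicOfDegree.1 (hmaps f hf)).2,
    (mem_monicOfDegree.1 hf).2, (hcoeff f).1, (hcoeff f).2.1, (hcoeff f).2.2, normAtI_add_mul, harg,
    AddChar.map_add_eq_mul, mul_left_comm]

theorem monicSum_eq_zero_of_mulChar_ne_one (hχ : χ ≠ 1) (hD : 3 ≤ D) :
    monicSum (weight χ ψ 0 0) D = 0 := by
  obtain ⟨s, hs⟩ := MulChar.ne_one_iff.1 hχ
  let φ (f : K[X]) : K[X] := f + (X ^ 2 + 1) * (C (((s : K)⁻¹ - 1) * f.coeff 0) * X ^ 0)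
  have hmaps : ∀ f ∈ monicOfDegree K D, φ f ∈ monicOfDegree K D := fun f hf =>
    add_mem_monicOfDegree hf (degree_X_sq_add_one_mul_lt _ (by omega))
  have hcoeff (f : K[X]) : (φ f).coeff 0 = (s : K)⁻¹ * f.coeff 0 := by
    simp only [φ, coeff_add_X_sq_add_one_mul]
    simp
    ring
  have hinj : Function.Injective φ := fun f g h => by
    have h0 : f.coeff 0 = g.coeff 0 := by
      simpa [hcoeff] using congrArg (fun p => p.coeff 0) h
    simpa [φ, h0] using h
  refine sum_eq_zero_of_map_eq_mul hmaps hinj.injOn hs fun f hf => ?_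
  have harg : normAtI f * ((-1) ^ D * ((s : K)⁻¹ * f.coeff 0))⁻¹ =
      s * (normAtI f * ((-1) ^ D * f.coeff 0)⁻¹) := by
    rw [mul_inv, mul_inv, mul_inv, inv_inv]
    ring
  simp only [weight, zero_mul, add_zero, AddChar.map_zero_eq_one, mul_one]
  rw [(mem_monicOfDegree.1 (hmaps f hf)).2, (mem_monicOfDegree.1 hf).2, hcoeff, normAtI_add_mul,
    harg, map_mul]

theorem monicSum_weight_eq_zero (hψ : ψ ≠ 1) (h : χ ≠ 1 ∨ u ≠ 0 ∨ v ≠ 0) (hD : 5 ≤ D) :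
    monicSum (weight χ ψ u v) D = 0 := by
  by_cases hu : u = 0
  · by_cases hv : v = 0
    · subst hu hv
      exact monicSum_eq_zero_of_mulChar_ne_one (by simpa using h) (by omega)
    · exact monicSum_eq_zero_of_right_ne_zero hψ hv hD
  · exact monicSum_eq_zero_of_left_ne_zero hψ hu hD

end Vanishing

end

/-! ### The Weil bound -/

section PowerSums

variable {k : Type*} [Field k]

open Polynomial in
theorem exists_eq_prod_one_sub_C_mul_X [IsAlgClosed k] {p : k[X]} (hp : p.coeff 0 = 1) :
    ∃ W : Multiset k, Multiset.card W ≤ p.natDegree ∧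
      p = (W.map fun ω => 1 - C ω * X).prod := by
  refine ⟨p.roots.map fun a => a⁻¹, by simpa using p.card_roots', ?_⟩
  have hsplits := (IsAlgClosed.splits p).eq_prod_roots
  have hlinear : ∀ a ∈ p.roots, X - C a = C (-a) * (1 - C a⁻¹ * X) := by
    intro a ha
    have ha0 : a ≠ 0 := by
      rintro rfl
      have hroot := isRoot_of_mem_roots ha
      rw [IsRoot, ← coeff_zero_eq_eval_zero, hp] at hroot
      exact one_ne_zero hroot
    rw [mul_sub, mul_one, ← mul_assoc, ← C_mul, neg_mul, mul_inv_cancel₀ ha0]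
    simp only [map_neg, map_one]
    ring
  rw [Multiset.map_congr rfl hlinear, Multiset.prod_map_mul] at hsplits
  set q := (p.roots.map fun a => 1 - C a⁻¹ * X).prod with hq
  have hconst : C p.leadingCoeff * (p.roots.map fun a => C (-a)).prod =
      C (p.leadingCoeff * (p.roots.map fun a => -a).prod) := by
    rw [C_mul, map_multiset_prod, Multiset.map_map]
    rfl
  have hq0 : q.coeff 0 = 1 := by
    rw [hq, coeff_zero_eq_eval_zero, eval_multiset_prod, Multiset.map_map]
    simp
  rw [← mul_assoc, hconst] at hsplits
  have hone := congrArg (fun f => f.coeff 0) hsplits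
  simp only [coeff_C_mul, hq0, hp, mul_one] at hone
  rw [Multiset.map_map]
  change p = q
  rw [hsplits, ← hone, C_1, one_mul]

open PowerSeries in
theorem derivative_prod_one_sub_C_mul_X (W : Multiset k) :
    d⁄dX k (W.map fun ω => (1 - C ω * X : k⟦X⟧)).prod =
      -((W.map fun ω => (1 - C ω * X : k⟦X⟧)).prod *
        PowerSeries.mk fun m => (W.map fun ω => ω ^ (m + 1)).sum) := by
  induction W using Multiset.induction_on with
  | empty =>
    have hzero : (PowerSeries.mk fun m => ((0 : Multiset k).map fun ω => ω ^ (m + 1)).sum) = 0 := by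
      ext
      simp
    rw [hzero]
    simp
  | cons ω W ih =>
    have hcons : (PowerSeries.mk fun m => ((ω ::ₘ W).map fun ω => ω ^ (m + 1)).sum) =
        (PowerSeries.mk fun m => ω ^ (m + 1)) +
          PowerSeries.mk fun m => (W.map fun ω => ω ^ (m + 1)).sum := by
      ext
      simp
    have hgeom : (1 - C ω * X : k⟦X⟧) * (PowerSeries.mk fun m => ω ^ (m + 1)) = C ω := by
      ext m
      rw [sub_mul, one_mul, mul_assoc, map_sub, coeff_C_mul, coeff_C, coeff_mk]
      rcases m with _ | m
      · simp
      · rw [coeff_succ_X_mul, coeff_mk, pow_succ' ω (m + 1), sub_self, if_neg m.succ_ne_zero]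
    have hderiv : d⁄dX k (1 - C ω * X : k⟦X⟧) = -C ω := by
      rw [map_sub, Derivation.leibniz]
      simp
    rw [Multiset.map_cons, Multiset.prod_cons, hcons, Derivation.leibniz, ih, hderiv]
    simp only [smul_eq_mul]
    linear_combination ((Multiset.map (fun ω => (1 - C ω * X : k⟦X⟧)) W).prod) * hgeom

open PowerSeries in
theorem exists_prod_one_sub_C_mul_X_eq_mk [IsAlgClosed k] {c : ℕ → k} (hc0 : c 0 = 1) {n : ℕ}
    (hc : ∀ D > n, c D = 0) :
    ∃ W : Multiset k, Multiset.card W ≤ n ∧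
      PowerSeries.mk c = (W.map fun ω => (1 - C ω * X : k⟦X⟧)).prod := by
  obtain ⟨W, hW, hprod⟩ := exists_eq_prod_one_sub_C_mul_X
    (p := PowerSeries.trunc (n + 1) (PowerSeries.mk c)) (by simp [coeff_trunc, hc0])
  refine ⟨W, hW.trans (Nat.lt_succ_iff.1 (natDegree_trunc_lt _ n)), ?_⟩
  have htrunc : (PowerSeries.trunc (n + 1) (PowerSeries.mk c) : k⟦X⟧) = PowerSeries.mk c := by
    ext D
    rw [Polynomial.coeff_coe, coeff_trunc, coeff_mk]
    split_ifs with h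
    · rfl
    · exact (hc D (by omega)).symm
  rw [← htrunc, hprod, ← Polynomial.coeToPowerSeries.ringHom_apply, map_multiset_prod,
    Multiset.map_map]
  refine congrArg Multiset.prod (Multiset.map_congr rfl fun ω _ => ?_)
  simp [Polynomial.coeToPowerSeries.ringHom_apply]

open PowerSeries in
theorem exists_power_sums_eq [IsAlgClosed k] {c s : ℕ → k} (hc0 : c 0 = 1) {n : ℕ}
    (hc : ∀ D > n, c D = 0)
    (hrec : ∀ D : ℕ, D * c D = ∑ p ∈ Finset.HasAntidiagonal.antidiagonal D, s p.1 * c p.2) :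
    ∃ W : Multiset k, Multiset.card W ≤ n ∧ ∀ m ≠ 0, s m = -(W.map fun ω => ω ^ m).sum := by
  obtain ⟨W, hW, hprod⟩ := exists_prod_one_sub_C_mul_X_eq_mk hc0 hc
  refine ⟨W, hW, fun m hm => ?_⟩
  have hL : PowerSeries.mk c ≠ 0 := fun h => by
    simpa [hc0] using congrArg (coeff 0) h
  have hlogDeriv : PowerSeries.mk s * PowerSeries.mk c = X * d⁄dX k (PowerSeries.mk c) := by
    ext D
    rw [coeff_mul]
    simp only [coeff_mk]
    rw [← hrec]
    rcases D with _ | D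
    · simp
    · rw [coeff_succ_X_mul, coeff_derivative, coeff_mk, mul_comm, Nat.cast_succ]
  have hS : PowerSeries.mk s = -(X * PowerSeries.mk fun m => (W.map fun ω => ω ^ (m + 1)).sum) := by
    refine mul_right_cancel₀ hL ?_
    rw [hlogDeriv, hprod, derivative_prod_one_sub_C_mul_X]
    ring
  obtain ⟨m, rfl⟩ := Nat.exists_eq_succ_of_ne_zero hm
  simpa [coeff_succ_X_mul] using congrArg (coeff (m + 1)) hS

end PowerSums

section Dominant

open Polynomial

theorem sum_map_pow_mul_eval {k : Type*} [CommRing k] (V : Multiset k) (g : k[X]) (l : ℕ) :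
    (V.map fun w => w ^ l * g.eval w).sum =
      ∑ i ∈ Finset.range (g.natDegree + 1), g.coeff i * (V.map fun w => w ^ (l + i)).sum := by
  simp_rw [← Multiset.sum_map_mul_left]
  rw [← Multiset.sum_map_sum]
  refine congrArg Multiset.sum (Multiset.map_congr rfl fun w _ => ?_)
  rw [eval_eq_sum_range, Finset.mul_sum]
  exact Finset.sum_congr rfl fun i _ => by ring

theorem exists_eval_mul_pow_eq {V : Multiset ℂ} {z : ℂ} (hz : z ∈ V) : ∃ g : ℂ[X], g.eval z ≠ 0 ∧
    ∀ l : ℕ, V.count z * (z ^ l * g.eval z) =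
      ∑ i ∈ Finset.range (g.natDegree + 1), g.coeff i * (V.map fun w => w ^ (l + i)).sum := by
  classical
  refine ⟨∏ w ∈ V.toFinset.erase z, (X - C w), ?_, fun l => ?_⟩
  · simp only [eval_prod, eval_sub, eval_X, eval_C, Finset.prod_ne_zero_iff]
    exact fun w hw => sub_ne_zero.2 (Finset.ne_of_mem_erase hw).symm
  · rw [← sum_map_pow_mul_eval, Finset.sum_multiset_map_count, Finset.sum_eq_single z]
    · rw [nsmul_eq_mul]
    · intro w hw hwz
      have hroot : (∏ w ∈ V.toFinset.erase z, (X - C w)).eval w = 0 := by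
        rw [eval_prod]
        exact Finset.prod_eq_zero (Finset.mem_erase.2 ⟨hwz, hw⟩) (by simp)
      rw [hroot, mul_zero, smul_zero]
    · exact fun h => absurd (Multiset.mem_toFinset.2 hz) h

theorem le_of_forall_mul_pow_le {x Q A B : ℝ} (hQ : 0 < Q) (hA : 0 < A) {l₀ : ℕ}
    (h : ∀ l ≥ l₀, A * x ^ l ≤ B * Q ^ l) : x ≤ Q := by
  by_contra! hlt
  have hratio : 1 < x / Q := (one_lt_div hQ).2 hlt
  obtain ⟨l, hl, hl₀⟩ :=
    (((tendsto_pow_atTop_atTop_of_one_lt hratio).eventually_gt_atTop (B / A)).and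
      (Filter.eventually_ge_atTop l₀)).exists
  rw [div_lt_iff₀ hA, div_pow, div_mul_eq_mul_div, lt_div_iff₀ (pow_pos hQ l)] at hl
  linarith [h l hl₀]

theorem norm_le_of_norm_power_sums_le {V : Multiset ℂ} {Q C : ℝ} (hQ : 0 < Q) {l₀ : ℕ}
    (h : ∀ l ≥ l₀, ‖(V.map fun z => z ^ l).sum‖ ≤ C * Q ^ l) {z : ℂ} (hz : z ∈ V) : ‖z‖ ≤ Q := by
  obtain ⟨g, hg, hpow⟩ := exists_eval_mul_pow_eq hz
  have hcount : 0 < ‖(V.count z : ℂ)‖ :=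
    norm_pos_iff.2 (Nat.cast_ne_zero.2 (Multiset.count_ne_zero.2 hz))
  refine le_of_forall_mul_pow_le hQ (mul_pos hcount (norm_pos_iff.2 hg)) (l₀ := l₀)
    (B := ∑ i ∈ Finset.range (g.natDegree + 1), ‖g.coeff i‖ * (C * Q ^ i)) fun l hl => ?_
  calc ‖(V.count z : ℂ)‖ * ‖g.eval z‖ * ‖z‖ ^ l = ‖V.count z * (z ^ l * g.eval z)‖ := by
        rw [norm_mul, norm_mul, norm_pow]
        ring
    _ = ‖∑ i ∈ Finset.range (g.natDegree + 1), g.coeff i * (V.map fun w => w ^ (l + i)).sum‖ := by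
        rw [hpow]
    _ ≤ ∑ i ∈ Finset.range (g.natDegree + 1), ‖g.coeff i‖ * (C * Q ^ (l + i)) := by
        refine norm_sum_le_of_le _ fun i _ => ?_
        rw [norm_mul]
        exact mul_le_mul_of_nonneg_left (h (l + i) (by omega)) (norm_nonneg _)
    _ = (∑ i ∈ Finset.range (g.natDegree + 1), ‖g.coeff i‖ * (C * Q ^ i)) * Q ^ l := by
        rw [Finset.sum_mul]
        exact Finset.sum_congr rfl fun i _ => by ring

theorem norm_sum_le_card_mul_sqrt {W : Multiset ℂ} {Q C : ℝ} (hQ : 0 < Q) {l₀ : ℕ}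
    (h : ∀ l ≥ l₀, ‖(W.map fun z => z ^ (2 * l)).sum‖ ≤ C * Q ^ l) :
    ‖W.sum‖ ≤ Multiset.card W * √Q := by
  have hsq : ∀ z ∈ W, ‖z ^ 2‖ ≤ Q := fun z hz =>
    norm_le_of_norm_power_sums_le (V := W.map fun z => z ^ 2) hQ
      (fun l hl => by simpa [Multiset.map_map, ← pow_mul] using h l hl)
      (Multiset.mem_map_of_mem _ hz)
  have hle : ∀ x ∈ W.map fun z => ‖z‖, x ≤ √Q := by
    intro x hx
    obtain ⟨z, hz, rfl⟩ := Multiset.mem_map.1 hx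
    exact Real.le_sqrt_of_sq_le (norm_pow z 2 ▸ hsq z hz)
  refine (norm_multiset_sum_le W).trans ?_
  simpa using Multiset.sum_le_card_nsmul _ _ hle

end Dominant

section Weil

variable {K : Type*} [Field K] [Fintype K] {χ : MulChar K ℂ} {ψ : AddChar K ℂ} {u v : K}

theorem norm_primePowerSum_weight_two_mul_le (hψ : ψ ≠ 1) (h : χ ≠ 1 ∨ u ≠ 0 ∨ v ≠ 0) {g l : ℕ}
    (hg : g = gapBound (Fintype.card K - 1) (Fintype.card K)) (hl : (g + 2) ^ 2 ≤ l) :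
    ‖primePowerSum (weight χ ψ u v) (2 * l)‖ ≤ (2 * g + 5) * (Fintype.card K : ℝ) ^ l := by
  obtain ⟨p, hp⟩ := CharP.exists K
  have : Fact p.Prime := ⟨CharP.char_is_prime K p⟩
  have hl0 : 0 < l := (pow_pos (Nat.succ_pos _) 2).trans_le hl
  have : NeZero (2 * l) := ⟨by omega⟩
  let E := FiniteField.Extension K p (2 * l)
  let _ : Fintype E := Fintype.ofFinite E
  have hcard : Fintype.card E = (Fintype.card K ^ l) ^ 2 := by
    rw [← Nat.card_eq_fintype_card, FiniteField.natCard_extension, Nat.card_eq_fintype_card,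
      ← pow_mul, mul_comm]
  rw [← FiniteField.finrank_extension K p (2 * l), ← charSum_eq_primePowerSum]
  exact norm_charSum_le E hψ h hg hcard (hl.trans (Nat.lt_pow_self Fintype.one_lt_card).le)

theorem norm_sum_mulChar_mul_addChar_le (hψ : ψ ≠ 1) (h : χ ≠ 1 ∨ u ≠ 0 ∨ v ≠ 0) :
    ‖∑ x : K, χ (x + x⁻¹) * ψ (u * x + v * x⁻¹)‖ ≤ 4 * √(Fintype.card K : ℝ) := by
  obtain ⟨W, hW, hpow⟩ := exists_power_sums_eq (c := monicSum (weight χ ψ u v)) (n := 4)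
    (monicSum_zero.trans (weight_one χ ψ u v)) (fun D hD => monicSum_weight_eq_zero hψ h hD)
    (natCast_mul_monicSum fun f g => weight_mul χ ψ u v)
  have hsum : ∑ x : K, χ (x + x⁻¹) * ψ (u * x + v * x⁻¹) = -W.sum := by
    have hbase : ∑ x : K, χ (x + x⁻¹) * ψ (u * x + v * x⁻¹) = charSum K χ ψ u v := by
      simp [charSum, Algebra.norm_self]
    rw [hbase, charSum_eq_primePowerSum, Module.finrank_self, hpow 1 one_ne_zero]
    simp
  have hcard : (0 : ℝ) < Fintype.card K := mod_cast Fintype.card_pos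
  rw [hsum, norm_neg]
  set g := gapBound (Fintype.card K - 1) (Fintype.card K) with hg
  refine (norm_sum_le_card_mul_sqrt hcard (C := 2 * g + 5) (l₀ := (g + 2) ^ 2)
    fun l hl => ?_).trans
    (mul_le_mul_of_nonneg_right (mod_cast hW) (Real.sqrt_nonneg _))
  have hl0 : 2 * l ≠ 0 := by
    have : 0 < l := (pow_pos (Nat.succ_pos _) 2).trans_le hl
    omega
  rw [← norm_neg, ← hpow (2 * l) hl0]
  exact norm_primePowerSum_weight_two_mul_le hψ h hg hl

end Weil

/-! ### Character expansions and the sieve -/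

section Convolution

variable {G : Type*} [CommGroup G] [Fintype G]

/-- The convolution of two complex functions on a finite abelian group; applied to the
coefficients of two character expansions it gives those of the product. -/
def convolution (c d : G → ℂ) (g : G) : ℂ :=
  ∑ h, c h * d (h⁻¹ * g)

theorem sum_convolution_mul (c d : G → ℂ) {φ : G → ℂ} (hφ : ∀ g h, φ (g * h) = φ g * φ h) :
    ∑ g, convolution c d g * φ g = (∑ g, c g * φ g) * ∑ g, d g * φ g := by
  simp_rw [convolution, Finset.sum_mul]
  rw [Finset.sum_comm]
  refine Finset.sum_congr rfl fun h _ => ?_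
  rw [Finset.mul_sum, ← Equiv.sum_comp (Equiv.mulLeft h)]
  refine Finset.sum_congr rfl fun g _ => ?_
  rw [Equiv.coe_mulLeft, inv_mul_cancel_left, hφ]
  ring

theorem sum_norm_convolution_le (c d : G → ℂ) :
    ∑ g, ‖convolution c d g‖ ≤ (∑ g, ‖c g‖) * ∑ g, ‖d g‖ := by
  refine (Finset.sum_le_sum fun g _ => norm_sum_le _ _).trans_eq ?_
  rw [Finset.sum_comm, Finset.sum_mul]
  refine Finset.sum_congr rfl fun h _ => ?_
  rw [Finset.mul_sum, ← Equiv.sum_comp (Equiv.mulLeft h)]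
  simp

theorem pow_mul_eq_one_of_convolution_ne_zero {c d : G → ℂ} {m n : ℕ}
    (hc : ∀ g, c g ≠ 0 → g ^ m = 1) (hd : ∀ g, d g ≠ 0 → g ^ n = 1) {g : G}
    (hg : convolution c d g ≠ 0) : g ^ (m * n) = 1 := by
  obtain ⟨h, -, hh⟩ := Finset.exists_ne_zero_of_sum_ne_zero hg
  rw [← mul_inv_cancel_left h g, mul_pow, pow_mul, hc h (left_ne_zero_of_mul hh), one_pow, one_mul,
    mul_comm m, pow_mul, hd _ (right_ne_zero_of_mul hh), one_pow]

theorem convolution_one_of_coprime {c d : G → ℂ} {m n : ℕ} (hmn : m.Coprime n)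
    (hc : ∀ g, c g ≠ 0 → g ^ m = 1) (hd : ∀ g, d g ≠ 0 → g ^ n = 1) :
    convolution c d 1 = c 1 * d 1 := by
  rw [convolution, Finset.sum_eq_single 1]
  · simp
  · intro h _ hh
    by_contra hne
    have hm : h ^ m = 1 := hc h (left_ne_zero_of_mul hne)
    have hn : h ^ n = 1 := by simpa using hd _ (right_ne_zero_of_mul hne)
    refine hh (orderOf_eq_one_iff.1 (Nat.dvd_one.1 ?_))
    rw [← hmn.gcd_eq_one]
    exact Nat.dvd_gcd (orderOf_dvd_of_pow_eq_one hm) (orderOf_dvd_of_pow_eq_one hn)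
  · simp

end Convolution

section CharExpansion

variable {E : Type*} [Field E] [Fintype (MulChar E ℂ)] [DecidableEq (MulChar E ℂ)]

/-- `c` is the coefficient function of an expansion of `f` on `Eˣ` into multiplicative characters
of order dividing `m`, with principal coefficient `μ` and with nonprincipal coefficients of total
absolute value at most `B`. The value of `f` at `0` plays no role. -/
structure IsCharExpansion (c : MulChar E ℂ → ℂ) (f : E → ℝ) (m : ℕ) (μ B : ℝ) : Prop where
  eq_sum : ∀ y : E, y ≠ 0 → (f y : ℂ) = ∑ χ, c χ * χ y
  pow_eq_one : ∀ χ, c χ ≠ 0 → χ ^ m = 1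
  coeff_one : c 1 = μ
  sum_norm_le : ∑ χ ∈ Finset.univ.erase 1, ‖c χ‖ ≤ B

/-- `f` has some character expansion with the parameters `m`, `μ` and `B` of
`IsCharExpansion`. -/
def HasCharExpansion (f : E → ℝ) (m : ℕ) (μ B : ℝ) : Prop :=
  ∃ c, IsCharExpansion c f m μ B

variable {f g : E → ℝ} {m n : ℕ} {μ ν A B : ℝ}

theorem IsCharExpansion.sum_norm_le_add {c : MulChar E ℂ → ℂ} (h : IsCharExpansion c f m μ A)
    (hμ : 0 ≤ μ) : ∑ χ, ‖c χ‖ ≤ μ + A := by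
  rw [← Finset.add_sum_erase _ _ (Finset.mem_univ 1), h.coeff_one, Complex.norm_real,
    Real.norm_of_nonneg hμ]
  exact add_le_add_right h.sum_norm_le μ

theorem hasCharExpansion_const (r : ℝ) : HasCharExpansion (fun _ : E => r) 1 r 0 := by
  refine ⟨Pi.single 1 (r : ℂ), fun y hy => ?_, fun χ hχ => ?_, by simp, ?_⟩
  · simp [Pi.single_apply, MulChar.one_apply (IsUnit.mk0 y hy)]
  · rw [pow_one]
    exact not_imp_comm.1 (fun h => Pi.single_eq_of_ne h _) hχ
  · refine (Finset.sum_eq_zero fun χ hχ => ?_).le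
    simp [Pi.single_eq_of_ne (Finset.ne_of_mem_erase hχ)]

theorem HasCharExpansion.of_dvd (h : HasCharExpansion f m μ A) (hmn : m ∣ n) :
    HasCharExpansion f n μ A := by
  obtain ⟨c, hc⟩ := h
  obtain ⟨d, rfl⟩ := hmn
  refine ⟨c, hc.eq_sum, fun χ hχ => ?_, hc.coeff_one, hc.sum_norm_le⟩
  rw [pow_mul, hc.pow_eq_one χ hχ, one_pow]

theorem HasCharExpansion.add (hf : HasCharExpansion f m μ A) (hg : HasCharExpansion g m ν B) :
    HasCharExpansion (fun y => f y + g y) m (μ + ν) (A + B) := by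
  obtain ⟨c, hc⟩ := hf
  obtain ⟨d, hd⟩ := hg
  refine ⟨fun χ => c χ + d χ, fun y hy => ?_, fun χ hχ => ?_, ?_, ?_⟩
  · simp only [Complex.ofReal_add, hc.eq_sum y hy, hd.eq_sum y hy, add_mul, Finset.sum_add_distrib]
  · by_cases hcχ : c χ = 0
    · exact hd.pow_eq_one χ (by simpa [hcχ] using hχ)
    · exact hc.pow_eq_one χ hcχ
  · simp [hc.coeff_one, hd.coeff_one]
  · refine (Finset.sum_le_sum fun χ _ => norm_add_le _ _).trans ?_
    rw [Finset.sum_add_distrib]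
    exact add_le_add hc.sum_norm_le hd.sum_norm_le

-- Coprimality of `m` and `n` makes the principal coefficient multiplicative.
theorem HasCharExpansion.mul (hf : HasCharExpansion f m μ A) (hg : HasCharExpansion g n ν B)
    (hmn : m.Coprime n) (hμ : 0 ≤ μ) (hν : 0 ≤ ν) :
    HasCharExpansion (fun y => f y * g y) (m * n) (μ * ν) ((μ + A) * (ν + B) - μ * ν) := by
  obtain ⟨c, hc⟩ := hf
  obtain ⟨d, hd⟩ := hg
  have hone : convolution c d 1 = (μ * ν : ℝ) := by
    rw [convolution_one_of_coprime hmn hc.pow_eq_one hd.pow_eq_one, hc.coeff_one, hd.coeff_one,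
      Complex.ofReal_mul]
  refine ⟨convolution c d, fun y hy => ?_,
    fun χ => pow_mul_eq_one_of_convolution_ne_zero hc.pow_eq_one hd.pow_eq_one, hone, ?_⟩
  · rw [sum_convolution_mul c d fun χ η => MulChar.mul_apply χ η y, Complex.ofReal_mul,
      hc.eq_sum y hy, hd.eq_sum y hy]
  · have hnonneg : 0 ≤ μ + A :=
      (Finset.sum_nonneg fun _ _ => norm_nonneg _).trans (hc.sum_norm_le_add hμ)
    have htotal := (sum_norm_convolution_le c d).trans (mul_le_mul (hc.sum_norm_le_add hμ)
      (hd.sum_norm_le_add hν) (Finset.sum_nonneg fun _ _ => norm_nonneg _) hnonneg)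
    rw [← Finset.add_sum_erase _ _ (Finset.mem_univ 1), hone, Complex.norm_real,
      Real.norm_of_nonneg (mul_nonneg hμ hν)] at htotal
    linarith

end CharExpansion

section NonPower

variable {E : Type*} [Field E] [Fintype E] {l : ℕ}

theorem card_filter_mulChar_pow_eq_one [Fintype (MulChar E ℂ)] [DecidableEq (MulChar E ℂ)]
    (hl : l ∣ Fintype.card E - 1) :
    (Finset.univ.filter fun χ : MulChar E ℂ => χ ^ l = 1).card = l := by
  obtain ⟨e⟩ := MulChar.mulEquiv_units E ℂ
  have hker := IsCyclic.card_powMonoidHom_ker (G := Eˣ) l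
  rw [Nat.card_units, Nat.card_eq_fintype_card (α := E), Nat.gcd_eq_right hl] at hker
  rw [← Fintype.card_subtype, ← Nat.card_eq_fintype_card]
  refine Eq.trans ?_ hker
  exact Nat.card_congr (e.toEquiv.subtypeEquiv fun χ => by simp [MonoidHom.mem_ker, ← map_pow])

theorem mulChar_apply_eq_one_of_pow_eq_one (hl : l ∣ Fintype.card E - 1) {y : E} (hy : y ≠ 0)
    (hpow : y ^ ((Fintype.card E - 1) / l) = 1) {χ : MulChar E ℂ} (hχ : χ ^ l = 1) : χ y = 1 := by
  have hcard : Nat.card Eˣ = Fintype.card E - 1 := by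
    rw [Nat.card_units, Nat.card_eq_fintype_card]
  obtain ⟨z, hz⟩ := exists_pow_eq_of_pow_card_div_eq_one (x := Units.mk0 y hy) (hcard ▸ hl)
    (by rw [hcard]; exact Units.ext (by simpa using hpow))
  have hyz : y = (z : E) ^ l := by simpa using (congrArg Units.val hz).symm
  rw [hyz, map_pow, ← MulChar.pow_apply_coe, hχ, MulChar.one_apply_coe]

theorem exists_mulChar_pow_eq_one_and_apply_ne_one (hl : l ∣ Fintype.card E - 1) {y : E}
    (hy : y ≠ 0) (hpow : y ^ ((Fintype.card E - 1) / l) ≠ 1) :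
    ∃ χ : MulChar E ℂ, χ ^ l = 1 ∧ χ y ≠ 1 := by
  have : NeZero (Monoid.exponent Eˣ) := ⟨Monoid.exponent_ne_zero_of_finite⟩
  obtain ⟨η, hη⟩ := MulChar.exists_apply_ne_one_of_hasEnoughRootsOfUnity E ℂ hpow
  refine ⟨η ^ ((Fintype.card E - 1) / l), ?_, ?_⟩
  · rw [← pow_mul, Nat.div_mul_cancel hl]
    ext z
    rw [MulChar.pow_apply_coe, ← map_pow, FiniteField.pow_card_sub_one_eq_one _ z.ne_zero, map_one,
      MulChar.one_apply_coe]
  · lift y to Eˣ using hy.isUnit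
    rwa [MulChar.pow_apply_coe, ← map_pow]

theorem sum_mulChar_pow_eq_one_apply [DecidableEq E] [Fintype (MulChar E ℂ)]
    [DecidableEq (MulChar E ℂ)] (hl : l ∣ Fintype.card E - 1) {y : E} (hy : y ≠ 0) :
    ∑ χ : MulChar E ℂ with χ ^ l = 1, χ y =
      if y ^ ((Fintype.card E - 1) / l) = 1 then (l : ℂ) else 0 := by
  split_ifs with hpow
  · rw [Finset.sum_congr rfl fun χ hχ =>
      mulChar_apply_eq_one_of_pow_eq_one hl hy hpow (Finset.mem_filter.1 hχ).2]
    simp [card_filter_mulChar_pow_eq_one hl]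
  · obtain ⟨η, hη, hηy⟩ := exists_mulChar_pow_eq_one_and_apply_ne_one hl hy hpow
    have hshift : ∑ χ : MulChar E ℂ with χ ^ l = 1, χ y =
        η y * ∑ χ : MulChar E ℂ with χ ^ l = 1, χ y := by
      rw [Finset.mul_sum]
      refine (Finset.sum_equiv (Equiv.mulLeft η) (fun χ => ?_) fun χ _ => ?_).symm
      · simp [mul_pow, hη]
      · simp
    exact (mul_eq_zero.1 (by linear_combination hshift :
      (1 - η y) * ∑ χ : MulChar E ℂ with χ ^ l = 1, χ y = 0)).resolve_left
      (sub_ne_zero.2 hηy.symm)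

open Classical in
/-- The indicator function of the elements of `Eˣ` that are not `l`-th powers, for `l` dividing
`#Eˣ`; being an `l`-th power is encoded by Euler's criterion. -/
noncomputable def nonPowerIndicator (E : Type*) [Field E] [Fintype E] (l : ℕ) (y : E) : ℝ :=
  if y ^ ((Fintype.card E - 1) / l) = 1 then 0 else 1

theorem nonPowerIndicator_nonneg (l : ℕ) (y : E) : 0 ≤ nonPowerIndicator E l y := by
  rw [nonPowerIndicator]
  split_ifs <;> norm_num

theorem nonPowerIndicator_le_one (l : ℕ) (y : E) : nonPowerIndicator E l y ≤ 1 := by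
  rw [nonPowerIndicator]
  split_ifs <;> norm_num

variable [Fintype (MulChar E ℂ)] [DecidableEq (MulChar E ℂ)]

theorem hasCharExpansion_nonPowerIndicator (hl : l ∣ Fintype.card E - 1) :
    HasCharExpansion (nonPowerIndicator E l) l (1 - 1 / l) (1 - 1 / l) := by
  classical
  have hl0 : l ≠ 0 := by
    rintro rfl
    exact Nat.sub_ne_zero_of_lt Fintype.one_lt_card (zero_dvd_iff.1 hl)
  refine ⟨fun χ => (if χ = 1 then 1 else 0) - if χ ^ l = 1 then (1 / l : ℂ) else 0,
    fun y hy => ?_, fun χ hχ => ?_, by simp, ?_⟩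
  · simp_rw [sub_mul, ite_mul, zero_mul]
    rw [Finset.sum_sub_distrib, Finset.sum_ite_eq', if_pos (Finset.mem_univ _), ← Finset.sum_filter,
      ← Finset.mul_sum, sum_mulChar_pow_eq_one_apply hl hy, MulChar.one_apply (IsUnit.mk0 y hy),
      nonPowerIndicator]
    split_ifs
    · simp [hl0]
    · simp
  · by_contra hχl
    have hχ1 : χ ≠ 1 := by
      rintro rfl
      exact hχl (one_pow l)
    simp [hχl, hχ1] at hχ
  · have htotal : ∑ χ : MulChar E ℂ, (if χ ^ l = 1 then (1 / l : ℝ) else 0) = 1 := by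
      rw [← Finset.sum_filter, Finset.sum_const, card_filter_mulChar_pow_eq_one hl]
      simp [hl0]
    rw [← Finset.add_sum_erase _ _ (Finset.mem_univ 1), one_pow, if_pos rfl] at htotal
    rw [← eq_sub_of_add_eq' htotal]
    refine Finset.sum_le_sum fun χ hχ => ?_
    rw [if_neg (Finset.ne_of_mem_erase hχ)]
    split_ifs <;> simp

theorem one_sub_one_div_pos {p : ℕ} (hp : p.Prime) : 0 < 1 - 1 / (p : ℝ) := by
  rw [sub_pos, div_lt_one (mod_cast hp.pos)]
  exact_mod_cast hp.one_lt

theorem hasCharExpansion_prod_nonPowerIndicator {T : Finset ℕ} (hprime : ∀ p ∈ T, p.Prime)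
    (hdvd : ∀ p ∈ T, p ∣ Fintype.card E - 1) :
    HasCharExpansion (fun y => ∏ p ∈ T, nonPowerIndicator E p y) (∏ p ∈ T, p)
      (∏ p ∈ T, (1 - 1 / (p : ℝ))) ((∏ p ∈ T, (1 - 1 / (p : ℝ))) * (2 ^ T.card - 1)) := by
  induction T using Finset.induction_on with
  | empty => simpa using hasCharExpansion_const (E := E) 1
  | insert p T hp ih =>
    rw [Finset.forall_mem_insert] at hprime hdvd
    have hcoprime : p.Coprime (∏ r ∈ T, r) := Nat.Coprime.prod_right fun r hr =>
      (Nat.coprime_primes hprime.1 (hprime.2 r hr)).2 (ne_of_mem_of_not_mem hr hp).symm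
    have hmul := (hasCharExpansion_nonPowerIndicator hdvd.1).mul (ih hprime.2 hdvd.2) hcoprime
      (one_sub_one_div_pos hprime.1).le
      (Finset.prod_nonneg fun r hr => (one_sub_one_div_pos (hprime.2 r hr)).le)
    simp only [Finset.prod_insert hp, Finset.card_insert_of_notMem hp]
    convert hmul using 1
    ring

theorem hasCharExpansion_const_add_sum_nonPowerIndicator (r : ℝ) {P : Finset ℕ} {m : ℕ}
    (hdvd : ∀ p ∈ P, p ∣ Fintype.card E - 1) (hm : ∀ p ∈ P, p ∣ m) :
    HasCharExpansion (fun y : E => r + ∑ p ∈ P, nonPowerIndicator E p y) m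
      (r + ∑ p ∈ P, (1 - 1 / (p : ℝ))) (∑ p ∈ P, (1 - 1 / (p : ℝ))) := by
  induction P using Finset.induction_on with
  | empty => simpa using (hasCharExpansion_const (E := E) r).of_dvd (one_dvd m)
  | insert p P hp ih =>
    rw [Finset.forall_mem_insert] at hdvd hm
    have hadd := ((hasCharExpansion_nonPowerIndicator hdvd.1).of_dvd hm.1).add (ih hdvd.2 hm.2)
    simp only [Finset.sum_insert hp, add_left_comm r]
    exact hadd

end NonPower

section Sieve

variable {E : Type*} [Field E] [Fintype E] {T P : Finset ℕ}

/-- A lower bound for the indicator of the elements of `Eˣ` that are `p`-th powers for no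
`p ∈ T ∪ P`: full inclusion–exclusion on `T` and the union bound on the sieving primes `P`. -/
noncomputable def sieveFunction (E : Type*) [Field E] [Fintype E] (T P : Finset ℕ) (y : E) : ℝ :=
  (∏ p ∈ T, nonPowerIndicator E p y) * (1 - P.card + ∑ p ∈ P, nonPowerIndicator E p y)

theorem nonPowerIndicator_ne_zero_of_sieveFunction_pos {y : E} (hy : 0 < sieveFunction E T P y)
    {p : ℕ} (hp : p ∈ T ∪ P) : nonPowerIndicator E p y ≠ 0 := by
  intro hzero
  refine hy.not_ge ?_
  rcases Finset.mem_union.1 hp with hpT | hpP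
  · rw [sieveFunction, Finset.prod_eq_zero hpT hzero, zero_mul]
  · refine mul_nonpos_of_nonneg_of_nonpos
      (Finset.prod_nonneg fun r _ => nonPowerIndicator_nonneg r y) ?_
    have hle : ∑ r ∈ P.erase p, nonPowerIndicator E r y ≤ (P.erase p).card := by
      simpa using Finset.sum_le_card_nsmul (P.erase p) _ 1 fun r _ => nonPowerIndicator_le_one r y
    rw [Finset.cast_card_erase_of_mem hpP] at hle
    rw [← Finset.add_sum_erase _ _ hpP, hzero]
    linarith

theorem orderOf_eq_of_sieveFunction_pos (hTP : (Fintype.card E - 1).primeFactors ⊆ T ∪ P) {y : E}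
    (hy0 : y ≠ 0) (hy : 0 < sieveFunction E T P y) : orderOf y = Fintype.card E - 1 := by
  have hcard : 0 < Fintype.card E - 1 := Nat.sub_pos_of_lt Fintype.one_lt_card
  refine orderOf_eq_of_pow_and_pow_div_prime hcard (FiniteField.pow_card_sub_one_eq_one y hy0)
    fun p hp hdvd hpow => ?_
  refine nonPowerIndicator_ne_zero_of_sieveFunction_pos hy
    (hTP (Nat.mem_primeFactors.2 ⟨hp, hdvd, hcard.ne'⟩)) ?_
  rw [nonPowerIndicator, if_pos hpow]

theorem hasCharExpansion_sieveFunction [Fintype (MulChar E ℂ)] [DecidableEq (MulChar E ℂ)]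
    (hprime : ∀ p ∈ T ∪ P, p.Prime) (hdvd : ∀ p ∈ T ∪ P, p ∣ Fintype.card E - 1)
    (hTP : Disjoint T P) {θ δ : ℝ} (hθ : θ = ∏ p ∈ T, (1 - 1 / (p : ℝ)))
    (hδ : δ = 1 - ∑ p ∈ P, 1 / (p : ℝ)) (hδ0 : 0 ≤ δ) :
    HasCharExpansion (sieveFunction E T P) ((∏ p ∈ T, p) * ∏ p ∈ P, p) (θ * δ)
      (θ * 2 ^ T.card * (P.card - 1 + 2 * δ) - θ * δ) := by
  simp only [Finset.forall_mem_union] at hprime hdvd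
  have hcoprime : (∏ p ∈ T, p).Coprime (∏ p ∈ P, p) :=
    Nat.Coprime.prod_left fun p hp => Nat.Coprime.prod_right fun r hr =>
      (Nat.coprime_primes (hprime.1 p hp) (hprime.2 r hr)).2
        fun h => Finset.disjoint_left.1 hTP hp (h ▸ hr)
  have hsum : ∑ p ∈ P, (1 - 1 / (p : ℝ)) = P.card - 1 + δ := by
    simp [hδ, Finset.sum_sub_distrib]
  have hconst := hasCharExpansion_const_add_sum_nonPowerIndicator (E := E) (1 - P.card) hdvd.2
    fun p hp => Finset.dvd_prod_of_mem (fun p => p) hp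
  have hprincipal : (1 - P.card : ℝ) + (P.card - 1 + δ) = δ := by ring
  rw [hsum, hprincipal] at hconst
  have hprod := hasCharExpansion_prod_nonPowerIndicator hprime.1 hdvd.1
  rw [← hθ] at hprod
  have hθ0 : 0 ≤ θ :=
    hθ ▸ Finset.prod_nonneg fun p hp => (one_sub_one_div_pos (hprime.1 p hp)).le
  convert hprod.mul hconst hcoprime hθ0 hδ0 using 1
  · rfl
  · ring

end Sieve

/-! ### Elements with prescribed traces -/

section TraceSum

variable {F E : Type*} [Field F] [Field E] [Fintype E] [Algebra F E]

variable (E) in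
/-- The character sum over `E` detecting, through its Fourier coefficients in `u` and `v`, the
elements `x` with prescribed traces of `x` and `x⁻¹`. The term at `x = 0` vanishes since
`χ 0 = 0`. -/
noncomputable def traceCharSum (χ : MulChar E ℂ) (ψ : AddChar F ℂ) (u v : F) : ℂ :=
  ∑ x : E, χ (x + x⁻¹) * ψ (u * Algebra.trace F E x + v * Algebra.trace F E x⁻¹)

theorem traceCharSum_one_zero_zero [DecidableEq E] (ψ : AddChar F ℂ) :
    traceCharSum E 1 ψ 0 0 = (Finset.univ.filter fun x : E => x + x⁻¹ ≠ 0).card := by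
  rw [traceCharSum, Finset.natCast_card_filter]
  refine Finset.sum_congr rfl fun x _ => ?_
  split_ifs with hx
  · simp [MulChar.one_apply (IsUnit.mk0 _ hx)]
  · rw [not_not.1 hx, MulChar.map_zero, zero_mul]

variable [Finite F]

omit [Fintype E] in
theorem compAddMonoidHom_trace_ne_one [Finite E] {ψ : AddChar F ℂ} (hψ : ψ ≠ 1) :
    ψ.compAddMonoidHom (Algebra.trace F E).toAddMonoidHom ≠ 1 := by
  refine fun h => hψ (DFunLike.ext _ _ fun x => ?_)
  obtain ⟨y, rfl⟩ := Algebra.trace_surjective F E x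
  simpa using DFunLike.congr_fun h y

theorem norm_traceCharSum_le {χ : MulChar E ℂ} {ψ : AddChar F ℂ} (hψ : ψ ≠ 1) {u v : F}
    (h : χ ≠ 1 ∨ u ≠ 0 ∨ v ≠ 0) : ‖traceCharSum E χ ψ u v‖ ≤ 4 * √(Fintype.card E : ℝ) := by
  have hweil := norm_sum_mulChar_mul_addChar_le (χ := χ) (u := algebraMap F E u)
    (v := algebraMap F E v) (compAddMonoidHom_trace_ne_one hψ) (by simpa using h)
  rw [traceCharSum]
  convert hweil using 6
  simp [← Algebra.smul_def]

end TraceSum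

section Count

variable {F E : Type*} [Field F] [Fintype F] [Field E] [Fintype E] [Algebra F E]
  [Fintype (MulChar E ℂ)]

theorem sum_addChar_neg_mul_eq [DecidableEq F] {ψ : AddChar F ℂ} (hψ : ψ ≠ 1) (a b s t : F) :
    ∑ i : F × F, ψ (-(i.1 * a + i.2 * b)) * ψ (i.1 * s + i.2 * t) =
      if s = a ∧ t = b then (Fintype.card F : ℂ) ^ 2 else 0 := by
  have hprim := AddChar.IsPrimitive.of_ne_one hψ
  have hsplit : ∀ i : F × F, ψ (-(i.1 * a + i.2 * b)) * ψ (i.1 * s + i.2 * t) =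
      ψ (i.1 * (s - a)) * ψ (i.2 * (t - b)) := fun i => by
    rw [← AddChar.map_add_eq_mul, ← AddChar.map_add_eq_mul]
    congr 1
    ring
  simp_rw [hsplit, Fintype.sum_prod_type, ← Finset.sum_mul_sum]
  rw [AddChar.sum_mulShift _ hprim, AddChar.sum_mulShift _ hprim]
  simp only [sub_eq_zero]
  split_ifs <;> simp_all [sq]

theorem card_sq_mul_sum_eq [DecidableEq F] [DecidableEq E] {ψ : AddChar F ℂ} (hψ : ψ ≠ 1)
    {f : E → ℝ} {c : MulChar E ℂ → ℂ} (hf : ∀ y, y ≠ 0 → (f y : ℂ) = ∑ χ, c χ * χ y) (a b : F) :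
    ((Fintype.card F : ℝ) ^ 2 * ∑ x : E with x + x⁻¹ ≠ 0 ∧ Algebra.trace F E x = a ∧
      Algebra.trace F E x⁻¹ = b, f (x + x⁻¹) : ℝ) =
    ∑ i : (F × F) × MulChar E ℂ,
      c i.2 * ψ (-(i.1.1 * a + i.1.2 * b)) * traceCharSum E i.2 ψ i.1.1 i.1.2 := by
  have hfactor : ∀ x : E, ∑ i : (F × F) × MulChar E ℂ, c i.2 * ψ (-(i.1.1 * a + i.1.2 * b)) *
      (i.2 (x + x⁻¹) * ψ (i.1.1 * Algebra.trace F E x + i.1.2 * Algebra.trace F E x⁻¹)) =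
      (if Algebra.trace F E x = a ∧ Algebra.trace F E x⁻¹ = b
        then (Fintype.card F : ℂ) ^ 2 else 0) * ∑ χ, c χ * χ (x + x⁻¹) := fun x => by
    rw [← sum_addChar_neg_mul_eq hψ, Finset.sum_mul_sum, Fintype.sum_prod_type]
    exact Finset.sum_congr rfl fun _ _ => Finset.sum_congr rfl fun _ _ => by ring
  simp_rw [traceCharSum, Finset.mul_sum]
  rw [Finset.sum_comm, Finset.sum_filter]
  push_cast
  refine Finset.sum_congr rfl fun x _ => ?_
  rw [hfactor]
  by_cases hx : x + x⁻¹ = 0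
  · simp [hx, MulChar.map_zero]
  · rw [← hf _ hx]
    split_ifs <;> simp_all

variable [DecidableEq (MulChar E ℂ)] {f : E → ℝ} {m : ℕ} {μ B : ℝ}

theorem norm_sum_nonprincipal_le [DecidableEq F] {ψ : AddChar F ℂ} (hψ : ψ ≠ 1)
    {c : MulChar E ℂ → ℂ} (hc : IsCharExpansion c f m μ B) (hμ : 0 ≤ μ) (a b : F) :
    ‖∑ i ∈ Finset.univ.erase (((0, 0), 1) : (F × F) × MulChar E ℂ),
      c i.2 * ψ (-(i.1.1 * a + i.1.2 * b)) * traceCharSum E i.2 ψ i.1.1 i.1.2‖ ≤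
      4 * √(Fintype.card E : ℝ) * ((Fintype.card F : ℝ) ^ 2 * (μ + B) - μ) := by
  have hterm : ∀ i ∈ Finset.univ.erase (((0, 0), 1) : (F × F) × MulChar E ℂ),
      ‖c i.2 * ψ (-(i.1.1 * a + i.1.2 * b)) * traceCharSum E i.2 ψ i.1.1 i.1.2‖ ≤
        4 * √(Fintype.card E : ℝ) * ‖c i.2‖ := fun i hi => by
    rw [norm_mul, norm_mul, AddChar.norm_apply, mul_one, mul_comm]
    refine mul_le_mul_of_nonneg_right (norm_traceCharSum_le hψ ?_) (norm_nonneg _)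
    by_contra! hi0
    exact Finset.ne_of_mem_erase hi (Prod.ext (Prod.ext hi0.2.1 hi0.2.2) hi0.1)
  have htotal : ∑ i : (F × F) × MulChar E ℂ, ‖c i.2‖ ≤ (Fintype.card F : ℝ) ^ 2 * (μ + B) := by
    rw [Fintype.sum_prod_type]
    simpa [sq] using mul_le_mul_of_nonneg_left (hc.sum_norm_le_add hμ)
      (by positivity : 0 ≤ (Fintype.card F : ℝ) ^ 2)
  rw [← Finset.add_sum_erase _ _ (Finset.mem_univ ((0, 0), 1)), hc.coeff_one, Complex.norm_real,
    Real.norm_of_nonneg hμ] at htotal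
  refine (norm_sum_le_of_le _ hterm).trans ?_
  rw [← Finset.mul_sum]
  exact mul_le_mul_of_nonneg_left (by linarith) (by positivity)

theorem exists_trace_eq_and_pos (hf : HasCharExpansion f m μ B) (hμ : 0 ≤ μ)
    (hlt : 4 * √(Fintype.card E : ℝ) * ((Fintype.card F : ℝ) ^ 2 * (μ + B) - μ) <
      μ * ((Fintype.card E : ℝ) - 3)) (a b : F) :
    ∃ x : E, x + x⁻¹ ≠ 0 ∧ Algebra.trace F E x = a ∧ Algebra.trace F E x⁻¹ = b ∧
      0 < f (x + x⁻¹) := by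
  classical
  obtain ⟨c, hc⟩ := hf
  obtain ⟨ψ, hψ1⟩ := AddChar.exists_apply_ne_zero.2 (one_ne_zero (α := F))
  have hψ : ψ ≠ 1 := by
    rintro rfl
    simp at hψ1
  have hcount := congrArg Complex.re (card_sq_mul_sum_eq hψ hc.eq_sum a b)
  have herror := (Complex.abs_re_le_norm _).trans (norm_sum_nonprincipal_le hψ hc hμ a b)
  rw [← Finset.add_sum_erase _ _ (Finset.mem_univ ((0, 0), 1))] at hcount
  simp only [zero_mul, add_zero, neg_zero, AddChar.map_zero_eq_one, mul_one, Complex.add_re,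
    traceCharSum_one_zero_zero, hc.coeff_one, Complex.re_ofReal_mul, Complex.natCast_re,
    Complex.ofReal_re] at hcount
  have hmain : μ * ((Fintype.card E : ℝ) - 3) ≤
      μ * (Finset.univ.filter fun x : E => x + x⁻¹ ≠ 0).card := by
    refine mul_le_mul_of_nonneg_left (sub_le_iff_le_add.2 ?_) hμ
    exact_mod_cast card_le_card_add_inv_ne_zero_add (F := E)
  have hpos : 0 < (Fintype.card F : ℝ) ^ 2 * ∑ x : E with x + x⁻¹ ≠ 0 ∧
      Algebra.trace F E x = a ∧ Algebra.trace F E x⁻¹ = b, f (x + x⁻¹) := by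
    rw [hcount]
    linarith [neg_le_of_abs_le herror]
  by_contra! hnonpos
  refine (pos_of_mul_pos_right hpos (by positivity)).not_ge (Finset.sum_nonpos fun x hx => ?_)
  obtain ⟨-, hx0, hxa, hxb⟩ := Finset.mem_filter.1 hx
  exact hnonpos x hx0 hxa hxb

end Count

theorem four_mul_sqrt_mul_lt_of_lt_rpow {q n : ℕ} (hq : 0 < q) {C : ℝ}
    (h : 4 * C < (q : ℝ) ^ ((n : ℝ) / 2 - 2)) :
    4 * √((q ^ n : ℕ) : ℝ) * ((q : ℝ) ^ 2 * C - 1) < ((q ^ n : ℕ) : ℝ) - 3 := by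
  have hqR : (0 : ℝ) < q := mod_cast hq
  have hsqrt : √((q ^ n : ℕ) : ℝ) = (q : ℝ) ^ ((n : ℝ) / 2 - 2) * (q : ℝ) ^ 2 := by
    rw [← Real.rpow_natCast (q : ℝ) 2, ← Real.rpow_add hqR, Real.sqrt_eq_rpow, Nat.cast_pow,
      ← Real.rpow_natCast (q : ℝ) n, ← Real.rpow_mul hqR.le]
    congr 1
    push_cast
    ring
  have hlt : 4 * C * (q : ℝ) ^ 2 < √((q ^ n : ℕ) : ℝ) := by
    rw [hsqrt]
    exact mul_lt_mul_of_pos_right h (by positivity)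
  have hsq : √((q ^ n : ℕ) : ℝ) * √((q ^ n : ℕ) : ℝ) = ((q ^ n : ℕ) : ℝ) :=
    Real.mul_self_sqrt (by positivity)
  have hone : 1 ≤ √((q ^ n : ℕ) : ℝ) :=
    Real.one_le_sqrt.2 (mod_cast Nat.one_le_pow n q hq)
  nlinarith [mul_lt_mul_of_pos_right hlt (zero_lt_one.trans_le hone)]

theorem primeFactors_union_filter_not_dvd {k N : ℕ} (hk : k ∣ N) (hN : N ≠ 0) :
    k.primeFactors ∪ N.primeFactors.filter (fun p => ¬ p ∣ k) = N.primeFactors := by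
  rw [← Nat.primeFactors_filter_dvd_of_dvd hN hk, Finset.filter_union_filter_not_eq]

theorem disjoint_primeFactors_filter_not_dvd (k N : ℕ) :
    Disjoint k.primeFactors (N.primeFactors.filter fun p => ¬ p ∣ k) :=
  Finset.disjoint_left.2 fun _ hp hp' =>
    (Finset.mem_filter.1 hp').2 (Nat.dvd_of_mem_primeFactors hp)

end TracePrimitive

open TracePrimitive

/-- The sieving criterion (Theorem 3.3): with sieving primes `p_1, …, p_s` (the
distinct primes dividing `q^n - 1` but not `k`), `δ = 1 - ∑ 1/pᵢ > 0` and
`Δ = (s-1)/δ + 2`, if `q^(n/2-2) > 4 Δ 2^(ω(k))` then every pair of traces is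
achieved by some `ξ` with `ξ + ξ⁻¹` primitive. -/
theorem stmt6 (q n : ℕ) (hq : IsPrimePow q) (hn : 0 < n)
    (k : ℕ) (hk : k ∣ q ^ n - 1)
    (ps : Finset ℕ) (hps : ps = (q ^ n - 1).primeFactors.filter fun p => ¬ p ∣ k)
    (δ Δ : ℝ) (hδdef : δ = 1 - ∑ p ∈ ps, (1 : ℝ) / p) (hδ : 0 < δ)
    (hΔdef : Δ = ((ps.card : ℝ) - 1) / δ + 2)
    (hcond : (q : ℝ) ^ ((n : ℝ) / 2 - 2) > 4 * Δ * 2 ^ k.primeFactors.card)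
    (F E : Type*) [Field F] [Fintype F] [Field E] [Fintype E] [Algebra F E]
    (hF : Fintype.card F = q) (hE : Fintype.card E = q ^ n) (a b : F) :
    ∃ ξ : E, ξ ≠ 0 ∧ Algebra.trace F E ξ = a ∧ Algebra.trace F E ξ⁻¹ = b ∧
      orderOf (ξ + ξ⁻¹) = q ^ n - 1 := by
  classical
  let _ : Fintype (MulChar E ℂ) := Fintype.ofFinite _
  have hcard : Fintype.card E - 1 ≠ 0 := Nat.sub_ne_zero_of_lt Fintype.one_lt_card
  have hunion : k.primeFactors ∪ ps = (Fintype.card E - 1).primeFactors := by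
    rw [hps, hE, primeFactors_union_filter_not_dvd hk (hE ▸ hcard)]
  have hdisjoint : Disjoint k.primeFactors ps := hps ▸ disjoint_primeFactors_filter_not_dvd k _
  set θ : ℝ := ∏ p ∈ k.primeFactors, (1 - 1 / (p : ℝ)) with hθ
  have hθ0 : 0 < θ :=
    Finset.prod_pos fun p hp => one_sub_one_div_pos (Nat.prime_of_mem_primeFactors hp)
  have hexpansion := hasCharExpansion_sieveFunction (E := E)
    (fun p hp => Nat.prime_of_mem_primeFactors (hunion ▸ hp))
    (fun p hp => Nat.dvd_of_mem_primeFactors (hunion ▸ hp)) hdisjoint hθ hδdef hδ.le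
  have hΔ : (ps.card : ℝ) - 1 + 2 * δ = δ * Δ := by
    rw [hΔdef]
    field_simp
  have hlt := mul_lt_mul_of_pos_left
    (four_mul_sqrt_mul_lt_of_lt_rpow hq.pos (by rwa [← mul_assoc])) (mul_pos hθ0 hδ)
  obtain ⟨ξ, hne, ha, hb, hpos⟩ := exists_trace_eq_and_pos hexpansion (mul_pos hθ0 hδ).le
    (by rw [hF, hE, hΔ]; linear_combination hlt) a b
  refine ⟨ξ, ?_, ha, hb, hE ▸ orderOf_eq_of_sieveFunction_pos hunion.ge hne hpos⟩
  rintro rfl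
  simp at hne
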